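/- Let T be a scalar Calderón–Zygmund operator on ℝ^d with modulus of continuity ω satisfying the Dini condition, let ρ ∈ (2,∞), let ε ∈ (0,1), and suppose V_ρ(T_*) is bounded on L^q(ℝ^d) for some q ∈ (1,∞). Then for every cube Q₀ ⊂ ℝ^d and every f ∈ L^∞(ℝ^d) supported in Q₀, there exists a family F of pairwise disjoint dyadic subcubes of Q₀ such that: (i) Σ_{Q∈F} |Q| ≤ ε|Q₀|; (ii) for a.e. x ∈ Q₀, |V_ρ(T_* f)(x) − Σ_{Q∈F} V_ρ(T_*(f χ_{3Q}))(x) χ_Q(x)| ≤ C ⟨|f|⟩_{3Q₀}; and (iii) for any collection F̄ of pairwise disjoint dyadic subcubes of Q₀ that covers F, |V_ρ(T_* f)(x) − Σ_{Q∈F̄} V_ρ(T_*(f χ_{3Q}))(x) χ_Q(x)| ≤ C ⟨|f|⟩_{3Q₀} for a.e. x ∈ Q₀. Here C depends only on T, ρ, ε and d. -/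

import Mathlib

open MeasureTheory Set Filter Classical
open scoped ENNReal
noncomputable section

abbrev Rd (d : ℕ) := EuclideanSpace ℝ (Fin d)

/-- An axis-parallel (half-open) cube in `ℝ^d`, given by its center and side length. -/
structure Cube (d : ℕ) where
  c : Fin d → ℝ
  l : ℝ
  hl : 0 < l

/-- The underlying (half-open) set of a cube. -/
def Cube.set {d : ℕ} (Q : Cube d) : Set (Rd d) :=
  {y | ∀ i, Q.c i - Q.l / 2 ≤ y i ∧ y i < Q.c i + Q.l / 2}

/-- The (half-open) set `tQ`, the cube concentric with `Q` of side length `t·ℓ(Q)`. -/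
def Cube.dilate {d : ℕ} (Q : Cube d) (t : ℝ) : Set (Rd d) :=
  {y | ∀ i, Q.c i - t * Q.l / 2 ≤ y i ∧ y i < Q.c i + t * Q.l / 2}

/-- The volume `|Q| = ℓ(Q)^d` of a cube, as an extended nonnegative real. -/
def Cube.vol {d : ℕ} (Q : Cube d) : ℝ≥0∞ := ENNReal.ofReal (Q.l ^ d)

/-- `Q` is one of the dyadic subcubes of `Q₀` obtained by repeated subdivision of `Q₀`
into `2^d` congruent subcubes. -/
def IsDyadicSubcube {d : ℕ} (Q₀ Q : Cube d) : Prop :=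
  ∃ (k : ℕ) (m : Fin d → ℕ), (∀ i, m i < 2 ^ k) ∧ Q.l = Q₀.l / 2 ^ k ∧
    ∀ i, Q.c i = Q₀.c i - Q₀.l / 2 + ((m i : ℝ) + 1 / 2) * (Q₀.l / 2 ^ k)
/-- A scalar Calderón–Zygmund operator on `ℝ^d` with Dini modulus of continuity:
a linear operator `T` bounded on `L²(ℝ^d)` associated with a kernel `K` satisfying the
size condition and the `ω`-smoothness condition, where `ω` is increasing, subadditive,
vanishes at `0`, and satisfies the Dini condition `∫₀¹ ω(t) dt/t < ∞`. -/
structure CZO (d : ℕ) where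
  K : Rd d → Rd d → ℝ
  measK : Measurable (Function.uncurry K)
  ω : ℝ → ℝ
  Cst : ℝ
  hCst : 0 < Cst
  ω_mono : MonotoneOn ω (Set.Ici 0)
  ω_zero : ω 0 = 0
  ω_subadd : ∀ s t : ℝ, 0 ≤ s → 0 ≤ t → ω (s + t) ≤ ω s + ω t
  dini : IntegrableOn (fun t => ω t / t) (Set.Ioo (0 : ℝ) 1)
  size : ∀ x y : Rd d, x ≠ y → |K x y| ≤ Cst / dist x y ^ d
  smooth : ∀ x x' y : Rd d, x ≠ y → dist x x' ≤ dist x y / 2 →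
    |K x y - K x' y| + |K y x - K y x'| ≤ Cst * ω (dist x x' / dist x y) / dist x y ^ d
  T : Lp ℝ 2 (volume : Measure (Rd d)) →L[ℝ] Lp ℝ 2 (volume : Measure (Rd d))
  assoc : ∀ f : Lp ℝ 2 (volume : Measure (Rd d)),
    ∀ᵐ x ∂(volume : Measure (Rd d)), x ∉ tsupport (f : Rd d → ℝ) →
      (T f : Rd d → ℝ) x = ∫ y, K x y * f y

/-- The truncated singular integral `T_ε f(x) = ∫_{|x-y|>ε} K(x,y) f(y) dy`. -/
def CZO.trunc {d : ℕ} (S : CZO d) (ε : ℝ) (f : Rd d → ℝ) (x : Rd d) : ℝ :=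
  ∫ y in {y : Rd d | ε < dist x y}, S.K x y * f y

/-- The variation operator `V_ρ(T_* f)(x)`, with values in `[0,∞]`: the supremum over all
strictly decreasing positive sequences `ε_i → 0` of `(Σ_i |T_{ε_{i+1}}f(x) - T_{ε_i}f(x)|^ρ)^{1/ρ}`. -/
def CZO.var {d : ℕ} (S : CZO d) (ρ : ℝ) (f : Rd d → ℝ) (x : Rd d) : ℝ≥0∞ :=
  ⨆ (ε : ℕ → ℝ) (_ : StrictAnti ε ∧ (∀ i, 0 < ε i) ∧ Tendsto ε atTop (nhds 0)),
    (∑' i : ℕ, ENNReal.ofReal |S.trunc (ε (i + 1)) f x - S.trunc (ε i) f x| ^ ρ) ^ (1 / ρ)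

/-- `V_ρ(T_*)` is bounded on `L^q(ℝ^d)`. -/
def CZO.VarBdd {d : ℕ} (S : CZO d) (ρ q : ℝ) : Prop :=
  ∃ A : ℝ, 0 < A ∧ ∀ f : Rd d → ℝ, Measurable f →
    ∫⁻ x, S.var ρ f x ^ q ∂volume ≤ ENNReal.ofReal A * ∫⁻ x, ENNReal.ofReal |f x| ^ q ∂volume

/-- The weak `(1,1)` operator (quasi-)norm `‖V_ρ(T_*)‖_{L¹ → L^{1,∞}}`. -/
def CZO.weak11Norm {d : ℕ} (S : CZO d) (ρ : ℝ) : ℝ≥0∞ :=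
  sInf {A : ℝ≥0∞ | ∀ f : Rd d → ℝ, Measurable f → ∀ t : ℝ, 0 < t →
    ENNReal.ofReal t * volume {x | ENNReal.ofReal t < S.var ρ f x} ≤
      A * ∫⁻ x, ENNReal.ofReal |f x| ∂volume}

/-- The local grand maximal truncated operator `M_{V_ρ(T_*),Q₀}`. -/
def CZO.grandMaxLoc {d : ℕ} (S : CZO d) (ρ : ℝ) (Q₀ : Cube d) (f : Rd d → ℝ) (x : Rd d) : ℝ≥0∞ :=
  if x ∈ Q₀.set then
    ⨆ (Q : Cube d) (_ : x ∈ Q.set ∧ Q.set ⊆ Q₀.set),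
      essSup (fun ξ => S.var ρ ((Q₀.dilate 3 \ Q.dilate 3).indicator f) ξ)
        (volume.restrict Q.set)
  else 0

/-- The (global) grand maximal truncated operator `M_{V_ρ(T_*)}`. -/
def CZO.grandMax {d : ℕ} (S : CZO d) (ρ : ℝ) (f : Rd d → ℝ) (x : Rd d) : ℝ≥0∞ :=
  ⨆ (Q : Cube d) (_ : x ∈ Q.set),
    essSup (fun ξ => S.var ρ (((Q.dilate 3)ᶜ).indicator f) ξ) (volume.restrict Q.set)

/-- The Hardy–Littlewood maximal operator over cubes, with values in `[0,∞]`. -/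
def maxCube {d : ℕ} (f : Rd d → ℝ) (x : Rd d) : ℝ≥0∞ :=
  ⨆ (Q : Cube d) (_ : x ∈ Q.set), Q.vol⁻¹ * ∫⁻ y in Q.set, ENNReal.ofReal |f y|

/-- The average `⟨|f|⟩_{3Q} = (1/|3Q|) ∫_{3Q} |f|`. -/
def avg3 {d : ℕ} (Q : Cube d) (f : Rd d → ℝ) : ℝ :=
  (∫ y in Q.dilate 3, |f y|) / (3 * Q.l) ^ d
/-- The Euclidean norm of a vector in `ℝ^n`. -/
def enorm' {n : ℕ} (v : Fin n → ℝ) : ℝ := Real.sqrt (∑ i, v i ^ 2)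

/-- The operator norm (with respect to Euclidean norms) of an `n × n` real matrix. -/
def matOpNorm {n : ℕ} (A : Matrix (Fin n) (Fin n) ℝ) : ℝ :=
  sSup ((fun v => enorm' (A.mulVec v)) '' {v | enorm' v ≤ 1})

/-- The spectral power `A^s` of a symmetric matrix `A = U D Uᵗ`, defined as `U D^s Uᵗ`
(junk value `A` if `A` is not symmetric). -/
def Matrix.rpowH {n : ℕ} (A : Matrix (Fin n) (Fin n) ℝ) (s : ℝ) : Matrix (Fin n) (Fin n) ℝ :=
  if h : A.IsHermitian then
    (h.eigenvectorUnitary : Matrix (Fin n) (Fin n) ℝ) *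
      Matrix.diagonal (fun i => h.eigenvalues i ^ s) *
      star (h.eigenvectorUnitary : Matrix (Fin n) (Fin n) ℝ)
  else A

/-- A matrix weight on `ℝ^d`: a measurable function with a.e. symmetric positive definite
values whose operator norm is locally integrable. -/
structure MatrixWeight (d n : ℕ) where
  W : Rd d → Matrix (Fin n) (Fin n) ℝ
  meas : ∀ i j, Measurable fun x => W x i j
  pd : ∀ᵐ x : Rd d, (W x).PosDef
  locInt : LocallyIntegrable (fun x => matOpNorm (W x)) (volume : Measure (Rd d))

/-- The matrix `A_p` characteristic `[W]_{A_p}`. -/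
def MatrixWeight.apConst {d n : ℕ} (W : MatrixWeight d n) (p : ℝ) : ℝ≥0∞ :=
  ⨆ Q : Cube d, Q.vol⁻¹ * ∫⁻ x in Q.set,
    (Q.vol⁻¹ * ∫⁻ t in Q.set,
        ENNReal.ofReal (matOpNorm ((W.W x).rpowH (1 / p) * (W.W t).rpowH (-(1 / p))))
          ^ (p / (p - 1))) ^ (p - 1)

/-- The norm of `f` in `L^p(W)`. -/
def MatrixWeight.wNorm {d n : ℕ} (W : MatrixWeight d n) (p : ℝ)
    (f : Rd d → Fin n → ℝ) : ℝ≥0∞ :=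
  (∫⁻ x, ENNReal.ofReal (enorm' (((W.W x).rpowH (1 / p)).mulVec (f x))) ^ p) ^ (1 / p)

/-- The Euclidean length `|V_ρ(T_{n,*} f⃗)(x)|` of the componentwise variation vector
(with values in `[0,∞]`). -/
def CZO.varVecNorm {d : ℕ} (n : ℕ) (S : CZO d) (ρ : ℝ) (f : Rd d → Fin n → ℝ)
    (x : Rd d) : ℝ≥0∞ :=
  (∑ j : Fin n, S.var ρ (fun y => f y j) x ^ (2 : ℝ)) ^ ((1 : ℝ) / 2)

/-- An `η`-sparse family of cubes. -/
def IsSparse {d : ℕ} (η : ℝ) (F : Set (Cube d)) : Prop :=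
  ∃ E : Cube d → Set (Rd d),
    (∀ Q ∈ F, E Q ⊆ Q.set ∧ MeasurableSet (E Q) ∧ ENNReal.ofReal η * Q.vol ≤ volume (E Q)) ∧
    F.PairwiseDisjoint E

/-- The convex body average `⟨⟨f⃗⟩⟩_{tQ}` of a vector-valued function over the cube `tQ`. -/
def convexBodyAvg {d n : ℕ} (f : Rd d → Fin n → ℝ) (Q : Cube d) (t : ℝ) :
    Set (Fin n → ℝ) :=
  {v | ∃ φ : Rd d → ℝ, Measurable φ ∧ (∀ y, |φ y| ≤ 1) ∧
    ∀ j, v j = (∫ y in Q.dilate t, φ y * f y j) / (t * Q.l) ^ d}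

/-- Polar coordinates for the lower Lebesgue integral of radial functions. -/
lemma lint_polar (d : ℕ) (hd : 0 < d) (F : ℝ → ℝ≥0∞) (hF : Measurable F) :
    ∫⁻ y : Rd d, F ‖y‖ = (volume : Measure (Rd d)).toSphere univ *
      ∫⁻ r in Ioi (0 : ℝ), ENNReal.ofReal (r ^ (d - 1)) * F r := by
  have : Nonempty (Fin d) := ⟨⟨0, hd⟩⟩
  have : Nontrivial (Rd d) := inferInstance
  set μ : Measure (Rd d) := volume
  have h1 : ∫⁻ x, F ‖x‖ ∂μ = ∫⁻ x : ({(0 : Rd d)}ᶜ : Set (Rd d)), F ‖x.1‖ ∂(μ.comap (↑)) := by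
    rw [lintegral_subtype_comap (measurableSet_singleton _).compl fun x ↦ F (‖x‖)]
    rw [restrict_compl_singleton]
  have hFm : Measurable (fun p : Metric.sphere (0 : Rd d) 1 × Ioi (0 : ℝ) => F p.2) :=
    hF.comp (measurable_subtype_coe.comp measurable_snd)
  have h2 := μ.measurePreserving_homeomorphUnitSphereProd.lintegral_comp hFm
  simp only [homeomorphUnitSphereProd_apply_snd_coe] at h2
  rw [h1, h2]
  rw [lintegral_prod _ hFm.aemeasurable]
  simp only [lintegral_const]
  rw [mul_comm]
  congr 1
  have hm : Measurable (fun r : Ioi (0 : ℝ) => F r) := hF.comp measurable_subtype_coe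
  rw [Measure.volumeIoiPow, lintegral_withDensity_eq_lintegral_mul _ _ hm]
  · have := lintegral_subtype_comap (μ := (volume : Measure ℝ)) (measurableSet_Ioi (a := (0:ℝ)))
      (fun r => ENNReal.ofReal (r ^ (d - 1)) * F r)
    rw [← this]
    simp
  · fun_prop

lemma lint_inv (a : ℝ) (ha : 0 < a) (F : ℝ → ℝ≥0∞) :
    ∫⁻ r in Ioi (0 : ℝ), ENNReal.ofReal (r⁻¹) * F (a / r) =
      ∫⁻ s in Ioi (0 : ℝ), ENNReal.ofReal (s⁻¹) * F s := by
  have him : (fun r : ℝ => a / r) '' Ioi 0 = Ioi 0 := by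
    ext s
    constructor
    · rintro ⟨r, hr, rfl⟩
      exact div_pos ha hr
    · intro hs
      refine ⟨a / s, div_pos ha hs, ?_⟩
      have : s ≠ 0 := ne_of_gt hs
      simp only
      field_simp
  have := lintegral_image_eq_lintegral_abs_deriv_mul (s := Ioi (0 : ℝ)) (f := fun r => a / r)
    (f' := fun r => - a / r ^ 2) measurableSet_Ioi
    (fun r hr => by
      have hr' : r ≠ 0 := ne_of_gt hr
      have h := ((hasDerivAt_const r a).div (hasDerivAt_id r) hr')
      simp only [id] at h
      have h' : HasDerivAt (fun r => a / r) (-a / r ^ 2) r := by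
        have he : -a / r ^ 2 = (0 * r - a * 1) / r ^ 2 := by ring
        rw [he]; exact h
      exact h'.hasDerivWithinAt)
    (fun r hr s hs h => by
      have hr' : r ≠ 0 := ne_of_gt hr
      have hs' : s ≠ 0 := ne_of_gt hs
      simp only at h
      field_simp at h
      exact h.symm)
    (fun s => ENNReal.ofReal (s⁻¹) * F s)
  rw [him] at this
  rw [this]
  refine setLIntegral_congr_fun measurableSet_Ioi (fun r hr => ?_)
  have hr' : 0 < r := hr
  rw [← mul_assoc, ← ENNReal.ofReal_mul (abs_nonneg _)]
  congr 2
  rw [abs_div, abs_neg, abs_of_pos ha, abs_of_pos (by positivity : 0 < r ^ 2)]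
  field_simp

lemma lint_polar_inv (d : ℕ) (hd : 0 < d) : ∃ Cp : ℝ≥0∞, Cp ≠ ∞ ∧
    ∀ (F : ℝ → ℝ≥0∞), Measurable F → ∀ (a : ℝ), 0 < a → ∀ ξ : Rd d,
    ∫⁻ y : Rd d, ENNReal.ofReal ((dist ξ y ^ d)⁻¹) * F (a / dist ξ y) =
      Cp * ∫⁻ s in Ioi (0 : ℝ), ENNReal.ofReal (s⁻¹) * F s := by
  refine ⟨(volume : Measure (Rd d)).toSphere univ, measure_ne_top _ _, ?_⟩
  intro F hF a ha ξ
  have h1 : ∫⁻ y : Rd d, ENNReal.ofReal ((dist ξ y ^ d)⁻¹) * F (a / dist ξ y) =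
      ∫⁻ y : Rd d, ENNReal.ofReal ((‖y‖ ^ d)⁻¹) * F (a / ‖y‖) := by
    have := lintegral_sub_left_eq_self (μ := (volume : Measure (Rd d)))
      (fun y => ENNReal.ofReal ((‖y‖ ^ d)⁻¹) * F (a / ‖y‖)) ξ
    simpa [dist_eq_norm] using this
  rw [h1, lint_polar d hd (fun r => ENNReal.ofReal ((r ^ d)⁻¹) * F (a / r)) (by fun_prop),
    ← lint_inv a ha F]
  congr 1
  refine setLIntegral_congr_fun measurableSet_Ioi (fun r hr => ?_)
  have hr' : 0 < r := hr
  rw [← mul_assoc, ← ENNReal.ofReal_mul (by positivity)]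
  congr 2
  obtain ⟨n, rfl⟩ : ∃ n, d = n + 1 := ⟨d - 1, by omega⟩
  simp only [Nat.add_sub_cancel]
  field_simp
  ring

/-- The singular weight near a sphere is integrable, uniformly. -/
lemma shell_lint (d : ℕ) (hd : 0 < d) : ∃ Cs : ℝ≥0∞, Cs ≠ ∞ ∧
    ∀ (e : ℝ), 0 < e → ∀ ξ : Rd d,
    ∫⁻ y in {y : Rd d | e / dist ξ y ∈ Icc (1/2 : ℝ) 2}, ENNReal.ofReal ((dist ξ y ^ d)⁻¹) *
      (ENNReal.ofReal |1 - e / dist ξ y|) ^ (-(1/2) : ℝ) ≤ Cs := by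
  obtain ⟨Cp, hCp, hP⟩ := lint_polar_inv d hd
  set F : ℝ → ℝ≥0∞ := (Icc (1/2 : ℝ) 2).indicator
    (fun s => (ENNReal.ofReal |1 - s|) ^ (-(1/2) : ℝ)) with hFdef
  have hF : Measurable F := by
    apply Measurable.indicator _ measurableSet_Icc
    fun_prop
  refine ⟨Cp * ∫⁻ s in Ioi (0 : ℝ), ENNReal.ofReal (s⁻¹) * F s, ?_, ?_⟩
  · refine ENNReal.mul_ne_top hCp ?_
    have hIntb : IntegrableOn (fun s : ℝ => |1 - s| ^ (-(1/2) : ℝ)) (Icc (1/2) 2) := by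
      have hI : IntervalIntegrable (fun s : ℝ => s ^ (-(1/2) : ℝ)) volume 0 1 :=
        intervalIntegral.intervalIntegrable_rpow' (by norm_num)
      have hA : IntegrableOn (fun s : ℝ => |1 - s| ^ (-(1/2) : ℝ)) (Ioc 1 2) := by
        have := hI.comp_sub_right 1
        norm_num at this
        rw [intervalIntegrable_iff_integrableOn_Ioc_of_le (by norm_num)] at this
        refine this.congr_fun (fun s hs => ?_) measurableSet_Ioc
        simp only
        rw [abs_sub_comm, abs_of_pos (by linarith [hs.1])]
      have hB : IntegrableOn (fun s : ℝ => |1 - s| ^ (-(1/2) : ℝ)) (Ioc 0 1) := by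
        have := (hI.comp_sub_left 1)
        norm_num at this
        have := this.symm
        rw [intervalIntegrable_iff_integrableOn_Ioc_of_le (by norm_num)] at this
        refine this.congr_fun (fun s hs => ?_) measurableSet_Ioc
        simp only
        rw [abs_of_nonneg (by linarith [hs.2])]
      refine (hB.union hA).mono_set ?_
      intro s hs
      by_cases h : s ≤ 1
      · left; exact ⟨by linarith [hs.1], h⟩
      · right; exact ⟨not_le.1 h, hs.2⟩
    have hfin : ∫⁻ s in Icc (1/2 : ℝ) 2, ENNReal.ofReal (|1 - s| ^ (-(1/2) : ℝ)) < ∞ := by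
      have := hIntb.hasFiniteIntegral
      rw [hasFiniteIntegral_iff_ofReal] at this
      · exact this
      · exact Eventually.of_forall (fun s => by positivity)
    have hle : ∫⁻ s in Ioi (0 : ℝ), ENNReal.ofReal (s⁻¹) * F s ≤
        2 * ∫⁻ s in Icc (1/2 : ℝ) 2, ENNReal.ofReal (|1 - s| ^ (-(1/2) : ℝ)) := by
      calc ∫⁻ s in Ioi (0 : ℝ), ENNReal.ofReal (s⁻¹) * F s 
          ≤ ∫⁻ s, ENNReal.ofReal (s⁻¹) * F s := setLIntegral_le_lintegral _ _
        _ = ∫⁻ s, (Icc (1/2 : ℝ) 2).indicator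
              (fun s => ENNReal.ofReal (s⁻¹) * (ENNReal.ofReal |1 - s|) ^ (-(1/2) : ℝ)) s := by
            refine lintegral_congr (fun s => ?_)
            rw [hFdef]
            by_cases h : s ∈ Icc (1/2 : ℝ) 2
            · simp only [indicator_of_mem h]
            · simp only [indicator_of_notMem h, mul_zero]
        _ = ∫⁻ s in Icc (1/2 : ℝ) 2, ENNReal.ofReal (s⁻¹) * (ENNReal.ofReal |1 - s|) ^ (-(1/2) : ℝ) :=
            lintegral_indicator measurableSet_Icc _
        _ ≤ ∫⁻ s in Icc (1/2 : ℝ) 2, 2 * ENNReal.ofReal (|1 - s| ^ (-(1/2) : ℝ)) := by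
            refine setLIntegral_mono_ae' measurableSet_Icc ?_
            have : ∀ᵐ s : ℝ, s ≠ 1 := by
              simp [ae_iff]
            filter_upwards [this] with s hs1 hs
            gcongr
            · calc ENNReal.ofReal s⁻¹ ≤ ENNReal.ofReal 2 := by
                    apply ENNReal.ofReal_le_ofReal
                    have : (1/2 : ℝ)⁻¹ = 2 := by norm_num
                    rw [← this]
                    exact inv_anti₀ (by norm_num) hs.1
                _ = 2 := by norm_num
            · rw [ENNReal.ofReal_rpow_of_pos]
              exact abs_pos.2 (sub_ne_zero.2 hs1.symm)
        _ = _ := by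
            rw [lintegral_const_mul' _ _ (by norm_num)]
    exact (lt_of_le_of_lt hle (ENNReal.mul_lt_top (by norm_num) hfin)).ne
  · intro e he ξ
    rw [← hP F hF e he ξ]
    rw [← lintegral_indicator]
    · refine lintegral_mono (fun y => ?_)
      by_cases h : y ∈ {y : Rd d | e / dist ξ y ∈ Icc (1/2 : ℝ) 2}
      · rw [indicator_of_mem h]
        have h' : e / dist ξ y ∈ Icc (1/2 : ℝ) 2 := h
        simp only [hFdef, indicator_of_mem h', le_refl]
      · rw [indicator_of_notMem h]
        exact zero_le
    · apply measurableSet_preimage _ measurableSet_Icc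
      fun_prop

/-- The combined modulus `ω(t) + √t`. -/
def CZO.W {d : ℕ} (S : CZO d) (t : ℝ) : ℝ := S.ω (max t 0) + Real.sqrt t

lemma CZO.ω_nonneg {d : ℕ} (S : CZO d) {t : ℝ} (ht : 0 ≤ t) : 0 ≤ S.ω t := by
  rw [← S.ω_zero]
  exact S.ω_mono (by simp) (by simpa using ht) ht

lemma CZO.W_mono {d : ℕ} (S : CZO d) : Monotone S.W := by
  intro s t hst
  unfold CZO.W
  have := S.ω_mono (a := max s 0) (b := max t 0) (by simp) (by simp) (by gcongr)
  have := Real.sqrt_le_sqrt hst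
  linarith

lemma CZO.W_nonneg {d : ℕ} (S : CZO d) (t : ℝ) : 0 ≤ S.W t := by
  unfold CZO.W
  have := S.ω_nonneg (t := max t 0) (by simp)
  positivity

lemma CZO.ω_le_W {d : ℕ} (S : CZO d) {t : ℝ} (ht : 0 ≤ t) : S.ω t ≤ S.W t := by
  unfold CZO.W
  rw [max_eq_left ht]
  have := Real.sqrt_nonneg t
  linarith

lemma CZO.sqrt_le_W {d : ℕ} (S : CZO d) {t : ℝ} : Real.sqrt t ≤ S.W t := by
  unfold CZO.W
  have := S.ω_nonneg (t := max t 0) (by simp)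
  linarith

/-- The tail weight. -/
def CZO.wt {d : ℕ} (S : CZO d) (a : ℝ) (x y : Rd d) : ℝ≥0∞ :=
  ENNReal.ofReal ((dist x y ^ d)⁻¹) * (Iio (1 : ℝ)).indicator (fun s => ENNReal.ofReal (S.W s)) (a / dist x y)

lemma CZO.dini_lint {d : ℕ} (hd : 0 < d) (S : CZO d) : ∃ Cw : ℝ≥0∞, Cw ≠ ∞ ∧
    ∀ (a : ℝ), 0 < a → ∀ ξ : Rd d, ∫⁻ y : Rd d, S.wt a ξ y ≤ Cw := by
  obtain ⟨Cp, hCp, hP⟩ := lint_polar_inv d hd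
  have hF : Measurable ((Iio (1 : ℝ)).indicator (fun s => ENNReal.ofReal (S.W s))) := by
    apply Measurable.indicator _ measurableSet_Iio
    exact S.W_mono.measurable.ennreal_ofReal
  refine ⟨_, ?_, fun a ha ξ => (hP _ hF a ha ξ).le⟩
  refine ENNReal.mul_ne_top hCp ?_
  have hIntb : IntegrableOn (fun s : ℝ => s⁻¹ * S.W s) (Ioo 0 1) := by
    have hI : IntervalIntegrable (fun s : ℝ => s ^ (-(1/2) : ℝ)) volume 0 1 :=
        intervalIntegral.intervalIntegrable_rpow' (by norm_num)
    rw [intervalIntegrable_iff_integrableOn_Ioo_of_le (by norm_num)] at hI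
    refine (S.dini.add hI).congr_fun (fun s hs => ?_) measurableSet_Ioo
    have hs0 : 0 < s := hs.1
    simp only [Pi.add_apply, CZO.W, max_eq_left hs0.le]
    rw [Real.sqrt_eq_rpow, mul_add, div_eq_inv_mul]
    congr 1
    rw [← Real.rpow_neg_one s, ← Real.rpow_add hs0]
    norm_num
  have hfin := hIntb.hasFiniteIntegral
  rw [hasFiniteIntegral_iff_ofReal] at hfin
  · refine ne_of_lt (lt_of_le_of_lt ?_ hfin)
    rw [← lintegral_indicator measurableSet_Ioi, ← lintegral_indicator measurableSet_Ioo]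
    refine lintegral_mono (fun s => ?_)
    by_cases h0 : s ∈ Ioi (0 : ℝ)
    · by_cases h1 : s ∈ Iio (1 : ℝ)
      · rw [indicator_of_mem h0, indicator_of_mem h1, indicator_of_mem (mem_Ioo.2 ⟨h0, h1⟩),
          ENNReal.ofReal_mul (inv_nonneg.2 (le_of_lt h0))]
      · rw [indicator_of_mem h0, indicator_of_notMem h1]
        simp
    · rw [indicator_of_notMem h0]; exact zero_le
  · filter_upwards [ae_restrict_mem measurableSet_Ioo] with s hs
    exact mul_nonneg (inv_nonneg.2 hs.1.le) (S.W_nonneg s)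

/-! ### Cubes -/

lemma Cube.ext' {d : ℕ} {P Q : Cube d} (hc : ∀ i, P.c i = Q.c i) (hl : P.l = Q.l) : P = Q := by
  cases P; cases Q
  simp only [Cube.mk.injEq] at *
  exact ⟨funext hc, hl⟩

lemma Cube.measurableSet_dilate {d : ℕ} (Q : Cube d) (t : ℝ) : MeasurableSet (Q.dilate t) := by
  have : Q.dilate t = ⋂ i, {y : Rd d | Q.c i - t * Q.l / 2 ≤ y i ∧ y i < Q.c i + t * Q.l / 2} := by
    ext y; simp [Cube.dilate]
  rw [this]
  refine MeasurableSet.iInter (fun i => ?_)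
  have hm : Measurable (fun y : Rd d => y i) := by fun_prop
  exact (measurableSet_le measurable_const hm).inter (measurableSet_lt hm measurable_const)

lemma Cube.set_eq_dilate {d : ℕ} (Q : Cube d) : Q.set = Q.dilate 1 := by
  simp [Cube.set, Cube.dilate]

lemma Cube.measurableSet_set {d : ℕ} (Q : Cube d) : MeasurableSet Q.set := by
  rw [Q.set_eq_dilate]; exact Q.measurableSet_dilate 1

lemma Cube.volume_dilate {d : ℕ} (Q : Cube d) (t : ℝ) (ht : 0 ≤ t) :
    volume (Q.dilate t) = ENNReal.ofReal (t ^ d) * Q.vol := by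
  have h := (EuclideanSpace.volume_preserving_symm_measurableEquiv_toLp (Fin d)).symm
  have hs : Q.dilate t = (MeasurableEquiv.toLp 2 (Fin d → ℝ)).symm ⁻¹'
      (Set.pi univ fun i => Ico (Q.c i - t * Q.l / 2) (Q.c i + t * Q.l / 2)) := by
    ext y
    simp [Cube.dilate]
  have h2 := (EuclideanSpace.volume_preserving_symm_measurableEquiv_toLp (Fin d)).measure_preimage
    (MeasurableSet.univ_pi
      (fun i => measurableSet_Ico (a := Q.c i - t * Q.l / 2) (b := Q.c i + t * Q.l / 2))).nullMeasurableSet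
  rw [hs, h2, Real.volume_pi_Ico]
  have : ∀ i, (Q.c i + t * Q.l / 2) - (Q.c i - t * Q.l / 2) = t * Q.l := fun i => by ring
  simp only [this, Finset.prod_const, Finset.card_univ, Fintype.card_fin, Cube.vol]
  rw [← ENNReal.ofReal_pow (mul_nonneg ht Q.hl.le), ← ENNReal.ofReal_mul (by positivity), mul_pow]

lemma Cube.volume_set {d : ℕ} (Q : Cube d) : volume Q.set = Q.vol := by
  rw [Q.set_eq_dilate, Q.volume_dilate 1 (by norm_num)]; simp

lemma Cube.vol_pos {d : ℕ} (Q : Cube d) : 0 < Q.vol :=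
  ENNReal.ofReal_pos.2 (pow_pos Q.hl d)

lemma Cube.vol_ne_top {d : ℕ} (Q : Cube d) : Q.vol ≠ ∞ := ENNReal.ofReal_ne_top

lemma Cube.center_mem {d : ℕ} (Q : Cube d) : (WithLp.toLp 2 Q.c : Rd d) ∈ Q.set := by
  intro i
  have := Q.hl
  simp only
  constructor <;> linarith

/-- The coordinates relative to `Q₀`. -/
def relc {d : ℕ} (Q₀ : Cube d) (y : Rd d) (i : Fin d) : ℝ := (y i - (Q₀.c i - Q₀.l / 2)) / Q₀.l

/-- The dyadic subcube of generation `k` and index `m`. -/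
def dyc {d : ℕ} (Q₀ : Cube d) (k : ℕ) (m : Fin d → ℕ) : Cube d where
  c := fun i => Q₀.c i - Q₀.l / 2 + ((m i : ℝ) + 1 / 2) * (Q₀.l / 2 ^ k)
  l := Q₀.l / 2 ^ k
  hl := div_pos Q₀.hl (by positivity)

lemma isDyadic_iff {d : ℕ} (Q₀ Q : Cube d) :
    IsDyadicSubcube Q₀ Q ↔ ∃ (k : ℕ) (m : Fin d → ℕ), (∀ i, m i < 2 ^ k) ∧ Q = dyc Q₀ k m := by
  constructor
  · rintro ⟨k, m, h1, h2, h3⟩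
    exact ⟨k, m, h1, Cube.ext' h3 h2⟩
  · rintro ⟨k, m, h1, rfl⟩
    exact ⟨k, m, h1, rfl, fun i => rfl⟩

lemma mem_dyc {d : ℕ} (Q₀ : Cube d) (k : ℕ) (m : Fin d → ℕ) (y : Rd d) :
    y ∈ (dyc Q₀ k m).set ↔ ∀ i, 0 ≤ relc Q₀ y i ∧ ⌊relc Q₀ y i * 2 ^ k⌋₊ = m i := by
  unfold Cube.set
  refine forall_congr' (fun i => ?_)
  have hl := Q₀.hl
  have h2 : (0 : ℝ) < 2 ^ k := by positivity
  set t := relc Q₀ y i with ht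
  have hy : y i = Q₀.c i - Q₀.l / 2 + t * Q₀.l := by
    rw [ht, relc]; field_simp; ring
  have e1 : (dyc Q₀ k m).c i - (dyc Q₀ k m).l / 2 ≤ y i ↔ (m i : ℝ) ≤ t * 2 ^ k := by
    have : y i - ((dyc Q₀ k m).c i - (dyc Q₀ k m).l / 2) = (t * 2 ^ k - m i) * (Q₀.l / 2 ^ k) := by
      rw [hy]; simp only [dyc]; field_simp; ring
    rw [← sub_nonneg, this, mul_nonneg_iff_of_pos_right (by positivity), sub_nonneg]
  have e2 : y i < (dyc Q₀ k m).c i + (dyc Q₀ k m).l / 2 ↔ t * 2 ^ k < (m i : ℝ) + 1 := by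
    have : ((dyc Q₀ k m).c i + (dyc Q₀ k m).l / 2) - y i = (m i + 1 - t * 2 ^ k) * (Q₀.l / 2 ^ k) := by
      rw [hy]; simp only [dyc]; field_simp; ring
    rw [← sub_pos, this, mul_pos_iff_of_pos_right (by positivity), sub_pos]
  rw [e1, e2]
  constructor
  · rintro ⟨h3, h4⟩
    have : 0 ≤ t * 2 ^ k := le_trans (by positivity) h3
    have ht0 : 0 ≤ t := nonneg_of_mul_nonneg_left this h2
    exact ⟨ht0, (Nat.floor_eq_iff this).2 ⟨h3, h4⟩⟩
  · rintro ⟨h3, h4⟩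
    exact (Nat.floor_eq_iff (by positivity)).1 h4

lemma mem_Q₀_iff {d : ℕ} (Q₀ : Cube d) (y : Rd d) :
    y ∈ Q₀.set ↔ ∀ i, 0 ≤ relc Q₀ y i ∧ relc Q₀ y i < 1 := by
  have : Q₀ = dyc Q₀ 0 (fun _ => 0) := by
    apply Cube.ext'
    · intro i; simp only [dyc]; simp
      ring
    · simp [dyc]
  rw [this, mem_dyc, ← this]
  refine forall_congr' (fun i => and_congr_right (fun h => ?_))
  simp [Nat.floor_eq_zero]

lemma dyc_zero {d : ℕ} (Q₀ : Cube d) (m : Fin d → ℕ) (hm : ∀ i, m i < 2 ^ 0) : dyc Q₀ 0 m = Q₀ := by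
  apply Cube.ext'
  · intro i
    have : m i = 0 := by have := hm i; simpa using this
    simp only [dyc, this]; simp
    ring
  · simp [dyc]

lemma floor_scale (t : ℝ) (k j : ℕ) : ⌊t * 2 ^ k⌋₊ = ⌊t * 2 ^ (k + j)⌋₊ / 2 ^ j := by
  have := Nat.floor_div_natCast (t * 2 ^ (k + j)) (2 ^ j)
  rw [← this]
  congr 1
  push_cast
  rw [pow_add]
  field_simp

lemma dyc_nested {d : ℕ} (Q₀ : Cube d) {k k' : ℕ} {m m' : Fin d → ℕ} (hk : k ≤ k') {y : Rd d}
    (h1 : y ∈ (dyc Q₀ k m).set) (h2 : y ∈ (dyc Q₀ k' m').set) :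
    (dyc Q₀ k' m').set ⊆ (dyc Q₀ k m).set := by
  obtain ⟨j, rfl⟩ := Nat.exists_eq_add_of_le hk
  intro z hz
  rw [mem_dyc] at *
  intro i
  refine ⟨(hz i).1, ?_⟩
  rw [floor_scale _ k j, (hz i).2, ← (h2 i).2, ← floor_scale, (h1 i).2]

lemma dyc_subset_Q₀ {d : ℕ} (Q₀ : Cube d) {k : ℕ} {m : Fin d → ℕ} (hm : ∀ i, m i < 2 ^ k) :
    (dyc Q₀ k m).set ⊆ Q₀.set := by
  intro z hz
  rw [mem_dyc] at hz
  rw [mem_Q₀_iff]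
  intro i
  refine ⟨(hz i).1, ?_⟩
  have h1 : relc Q₀ z i * 2 ^ k < (m i : ℝ) + 1 := by
    rw [← (hz i).2]; exact Nat.lt_floor_add_one _
  have h2 : (m i : ℝ) + 1 ≤ 2 ^ k := by
    have := hm i
    exact_mod_cast this
  have h3 : relc Q₀ z i * 2 ^ k < 1 * 2 ^ k := by linarith
  exact lt_of_mul_lt_mul_right h3 (by positivity)

lemma IsDyadicSubcube.subset {d : ℕ} {Q₀ Q : Cube d} (h : IsDyadicSubcube Q₀ Q) : Q.set ⊆ Q₀.set := by
  obtain ⟨k, m, hm, rfl⟩ := (isDyadic_iff _ _).1 h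
  exact dyc_subset_Q₀ Q₀ hm

lemma isDyadic_self {d : ℕ} (Q₀ : Cube d) : IsDyadicSubcube Q₀ Q₀ :=
  (isDyadic_iff _ _).2 ⟨0, fun _ => 0, by simp, (dyc_zero Q₀ _ (by simp)).symm⟩

lemma exists_dyc {d : ℕ} (Q₀ : Cube d) (k : ℕ) {x : Rd d} (hx : x ∈ Q₀.set) :
    ∃ Q, IsDyadicSubcube Q₀ Q ∧ x ∈ Q.set ∧ Q.l = Q₀.l / 2 ^ k := by
  rw [mem_Q₀_iff] at hx
  refine ⟨dyc Q₀ k (fun i => ⌊relc Q₀ x i * 2 ^ k⌋₊), (isDyadic_iff _ _).2 ⟨k, _, ?_, rfl⟩, ?_, rfl⟩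
  · intro i
    rw [Nat.floor_lt (mul_nonneg (hx i).1 (by positivity))]
    push_cast
    have h2 : (0 : ℝ) < 2 ^ k := by positivity
    nlinarith [(hx i).2]
  · rw [mem_dyc]
    exact fun i => ⟨(hx i).1, rfl⟩

lemma countable_dyadic {d : ℕ} (Q₀ : Cube d) : {Q | IsDyadicSubcube Q₀ Q}.Countable := by
  refine (countable_range (fun p : ℕ × (Fin d → ℕ) => dyc Q₀ p.1 p.2)).mono ?_
  intro Q hQ
  obtain ⟨k, m, hm, rfl⟩ := (isDyadic_iff _ _).1 hQ
  exact ⟨(k, m), rfl⟩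

lemma dyadic_nested {d : ℕ} {Q₀ P R : Cube d} (hP : IsDyadicSubcube Q₀ P)
    (hR : IsDyadicSubcube Q₀ R) {y : Rd d} (h1 : y ∈ P.set) (h2 : y ∈ R.set) :
    P.set ⊆ R.set ∨ R.set ⊆ P.set := by
  obtain ⟨k, m, hm, rfl⟩ := (isDyadic_iff _ _).1 hP
  obtain ⟨k', m', hm', rfl⟩ := (isDyadic_iff _ _).1 hR
  rcases le_total k k' with h | h
  · right; exact dyc_nested Q₀ h h1 h2
  · left; exact dyc_nested Q₀ h h2 h1

lemma Cube.eq_of_set_eq_of_l {d : ℕ} {Q₀ P R : Cube d} (hP : IsDyadicSubcube Q₀ P)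
    (hR : IsDyadicSubcube Q₀ R) (hl : P.l = R.l) (h : P.set ⊆ R.set) : P = R := by
  obtain ⟨k, m, hm, rfl⟩ := (isDyadic_iff _ _).1 hP
  obtain ⟨k', m', hm', rfl⟩ := (isDyadic_iff _ _).1 hR
  have hk : k = k' := by
    have h1 : Q₀.l / 2 ^ k = Q₀.l / 2 ^ k' := hl
    have hl := Q₀.hl
    have h2 : (2 : ℝ) ^ k = 2 ^ k' := by
      field_simp at h1
      exact h1.symm
    have h3 : (2 : ℕ) ^ k = 2 ^ k' := by exact_mod_cast h2
    exact Nat.pow_right_injective (le_refl 2) h3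
  subst hk
  have h1 := (mem_dyc _ _ _ _).1 (Cube.center_mem (dyc Q₀ k m))
  have h2 := (mem_dyc _ _ _ _).1 (h (Cube.center_mem (dyc Q₀ k m)))
  have : m = m' := funext fun i => by rw [← (h1 i).2, ← (h2 i).2]
  rw [this]

lemma dyadic_parent {d : ℕ} {Q₀ P : Cube d} (hP : IsDyadicSubcube Q₀ P) (hne : P ≠ Q₀) :
    ∃ P', IsDyadicSubcube Q₀ P' ∧ P.set ⊆ P'.set ∧ P'.l = 2 * P.l := by
  obtain ⟨k, m, hm, rfl⟩ := (isDyadic_iff _ _).1 hP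
  cases k with
  | zero => exact absurd (dyc_zero Q₀ m hm) hne
  | succ k =>
    refine ⟨dyc Q₀ k (fun i => m i / 2), (isDyadic_iff _ _).2 ⟨k, _, ?_, rfl⟩, ?_, ?_⟩
    · intro i
      have := hm i
      rw [pow_succ] at this
      omega
    · intro z hz
      rw [mem_dyc] at *
      intro i
      refine ⟨(hz i).1, ?_⟩
      rw [floor_scale _ k 1, (hz i).2]
      simp
    · simp only [dyc, pow_succ]
      field_simp

lemma Cube.vol_double {d : ℕ} {P P' : Cube d} (h : P'.l = 2 * P.l) : P'.vol = 2 ^ d * P.vol := by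
  unfold Cube.vol
  rw [h, mul_pow, ENNReal.ofReal_mul (by positivity), ENNReal.ofReal_pow (by norm_num)]
  norm_num

/-- Maximal bad cubes. -/
def maxBad {d : ℕ} (Q₀ : Cube d) (bad : Cube d → Prop) : Set (Cube d) :=
  {P | IsDyadicSubcube Q₀ P ∧ bad P ∧
    ∀ P', IsDyadicSubcube Q₀ P' → bad P' → P.set ⊆ P'.set → P' = P}

lemma Cube.l_le_of_subset {d : ℕ} (hd : 0 < d) {P R : Cube d} (h : P.set ⊆ R.set) : P.l ≤ R.l := by
  have h1 : P.vol ≤ R.vol := by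
    rw [← P.volume_set, ← R.volume_set]; exact measure_mono h
  unfold Cube.vol at h1
  rw [ENNReal.ofReal_le_ofReal_iff (by have := R.hl; positivity)] at h1
  exact le_of_pow_le_pow_left₀ hd.ne' R.hl.le h1

lemma maxBad_cover {d : ℕ} (hd : 0 < d) (Q₀ : Cube d) (bad : Cube d → Prop) {R : Cube d}
    (hR : IsDyadicSubcube Q₀ R) (hb : bad R) : ∃ P ∈ maxBad Q₀ bad, R.set ⊆ P.set := by
  have hex : ∃ k : ℕ, ∃ P, IsDyadicSubcube Q₀ P ∧ bad P ∧ R.set ⊆ P.set ∧ P.l = Q₀.l / 2 ^ k := by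
    obtain ⟨k, m, hm, h⟩ := (isDyadic_iff _ _).1 hR
    exact ⟨k, R, hR, hb, Subset.rfl, by rw [h]; rfl⟩
  obtain ⟨P, hP, hPb, hRP, hPl⟩ := Nat.find_spec hex
  refine ⟨P, ⟨hP, hPb, ?_⟩, hRP⟩
  intro P' hP' hb' hs
  obtain ⟨k, m, hm, h⟩ := (isDyadic_iff _ _).1 hP'
  have hl' : P'.l = Q₀.l / 2 ^ k := by rw [h]; rfl
  have hk : Nat.find hex ≤ k := Nat.find_min' hex ⟨P', hP', hb', hRP.trans hs, hl'⟩
  have hle := Cube.l_le_of_subset hd hs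
  have hge : P'.l ≤ P.l := by
    rw [hl', hPl]
    have := Q₀.hl
    gcongr
    norm_num
  exact (Cube.eq_of_set_eq_of_l hP hP' (le_antisymm hle hge) hs).symm

lemma maxBad_disjoint {d : ℕ} (Q₀ : Cube d) (bad : Cube d → Prop) :
    (maxBad Q₀ bad).PairwiseDisjoint Cube.set := by
  intro P hP R hR hne
  rw [Function.onFun, Set.disjoint_left]
  intro y h1 h2
  rcases dyadic_nested hP.1 hR.1 h1 h2 with h | h
  · exact hne (hP.2.2 R hR.1 hR.2.1 h).symm
  · exact hne (hR.2.2 P hP.1 hP.2.1 h)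

lemma maxBad_countable {d : ℕ} (Q₀ : Cube d) (bad : Cube d → Prop) : (maxBad Q₀ bad).Countable :=
  (countable_dyadic Q₀).mono (fun _ h => h.1)

lemma maxBad_parent {d : ℕ} (Q₀ : Cube d) (bad : Cube d → Prop) (h0 : ¬ bad Q₀) {P : Cube d}
    (hP : P ∈ maxBad Q₀ bad) : ∃ P', IsDyadicSubcube Q₀ P' ∧ ¬ bad P' ∧ P.set ⊆ P'.set ∧
      P'.vol = 2 ^ d * P.vol := by
  obtain ⟨P', h1, h2, h3⟩ := dyadic_parent hP.1 (fun h => h0 (h ▸ hP.2.1))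
  refine ⟨P', h1, fun hb => ?_, h2, Cube.vol_double h3⟩
  have := hP.2.2 P' h1 hb h2
  have hl := P.hl
  rw [this] at h3
  linarith

/-! ### Geometry -/

lemma coord_le_dist {d : ℕ} (x y : Rd d) (i : Fin d) : |x i - y i| ≤ dist x y := by
  have := PiLp.norm_apply_le (x - y) i
  rw [dist_eq_norm]
  simpa using this

lemma dist_le_of_coord {d : ℕ} (x y : Rd d) (a : ℝ) (ha : 0 ≤ a) (h : ∀ i, |x i - y i| ≤ a) :
    dist x y ≤ Real.sqrt d * a := by
  rw [EuclideanSpace.dist_eq]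
  have : ∑ i, dist (x i) (y i) ^ 2 ≤ d * a ^ 2 := by
    calc ∑ i, dist (x i) (y i) ^ 2 ≤ ∑ i : Fin d, a ^ 2 := by
          refine Finset.sum_le_sum (fun i _ => ?_)
          rw [Real.dist_eq]
          gcongr
          exact h i
      _ = d * a ^ 2 := by simp
  calc _ ≤ Real.sqrt (d * a ^ 2) := Real.sqrt_le_sqrt this
    _ = _ := by rw [Real.sqrt_mul (by positivity), Real.sqrt_sq ha]

lemma Cube.dist_le {d : ℕ} (Q : Cube d) {x y : Rd d} (hx : x ∈ Q.set) (hy : y ∈ Q.set) :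
    dist x y ≤ Real.sqrt d * Q.l := by
  refine dist_le_of_coord x y _ Q.hl.le (fun i => ?_)
  rw [abs_le]
  have := hx i
  have := hy i
  constructor <;> linarith

lemma Cube.l_le_dist {d : ℕ} (Q : Cube d) {x y : Rd d} (hx : x ∈ Q.set) (hy : y ∉ Q.dilate 3) :
    Q.l ≤ dist x y := by
  by_contra h
  apply hy
  intro i
  have h1 := (coord_le_dist x y i).trans_lt (not_le.1 h)
  rw [abs_lt] at h1
  have := hx i
  constructor <;> linarith

lemma Cube.dist_le_three {d : ℕ} (Q : Cube d) {x y : Rd d} (hx : x ∈ Q.set) (hy : y ∈ Q.dilate 3) :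
    dist x y ≤ Real.sqrt d * (2 * Q.l) := by
  refine dist_le_of_coord x y _ (by linarith [Q.hl]) (fun i => ?_)
  rw [abs_le]
  have := hx i
  have := hy i
  constructor <;> linarith

lemma Cube.mem_dilate_of_dist {d : ℕ} (P : Cube d) {x y : Rd d} {L : ℝ} (hy : y ∈ P.set)
    (h : dist x y ≤ L * P.l) : x ∈ P.dilate (2 * L + 2) := by
  intro i
  have h1 := (coord_le_dist x y i).trans h
  rw [abs_le] at h1
  have := hy i
  have := P.hl
  constructor <;> nlinarith

lemma Cube.dist_le_dilate {d : ℕ} (Q : Cube d) {x y : Rd d} (hx : x ∈ Q.dilate 3) (hy : y ∈ Q.dilate 3) :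
    dist x y ≤ Real.sqrt d * (3 * Q.l) := by
  refine dist_le_of_coord x y _ (by linarith [Q.hl]) (fun i => ?_)
  rw [abs_le]
  have := hx i
  have := hy i
  constructor <;> linarith

/-! ### Sequence lemmas -/

lemma lsum_mono {ρ σ : ℝ} (hσ : 0 < σ) (hσρ : σ ≤ ρ) (N : ℕ) (a : ℕ → ℝ≥0∞) :
    (∑ i ∈ Finset.range N, a i ^ ρ) ^ (1 / ρ) ≤ (∑ i ∈ Finset.range N, a i ^ σ) ^ (1 / σ) := by
  have hρ : 0 < ρ := hσ.trans_le hσρ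
  set B := (∑ i ∈ Finset.range N, a i ^ σ) ^ (1 / σ) with hB
  have hBσ : B ^ σ = ∑ i ∈ Finset.range N, a i ^ σ := by
    rw [hB, ← ENNReal.rpow_mul, one_div, inv_mul_cancel₀ hσ.ne', ENNReal.rpow_one]
  have ha : ∀ i ∈ Finset.range N, a i ≤ B := by
    intro i hi
    rw [← ENNReal.rpow_le_rpow_iff hσ, hBσ]
    exact Finset.single_le_sum (f := fun i => a i ^ σ) (fun _ _ => zero_le) hi
  rw [one_div, ENNReal.rpow_inv_le_iff hρ]
  calc ∑ i ∈ Finset.range N, a i ^ ρ ≤ ∑ i ∈ Finset.range N, a i ^ σ * B ^ (ρ - σ) := by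
        refine Finset.sum_le_sum (fun i hi => ?_)
        calc a i ^ ρ = a i ^ (σ + (ρ - σ)) := by ring_nf
          _ = a i ^ σ * a i ^ (ρ - σ) := ENNReal.rpow_add_of_nonneg _ _ hσ.le (by linarith)
          _ ≤ _ := by
              gcongr
              exact ha i hi
    _ = B ^ σ * B ^ (ρ - σ) := by rw [← Finset.sum_mul, hBσ]
    _ = B ^ ρ := by
        rw [← ENNReal.rpow_add_of_nonneg _ _ hσ.le (by linarith)]; ring_nf

lemma lsum_comb {ρ : ℝ} (hρ : 2 < ρ) (N : ℕ) (t p s v : ℕ → ℝ≥0∞)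
    (h : ∀ i < N, t i ≤ p i + s i + v i) :
    (∑ i ∈ Finset.range N, t i ^ ρ) ^ (1 / ρ) ≤
      ∑ i ∈ Finset.range N, p i + (∑ i ∈ Finset.range N, s i ^ (2 : ℝ)) ^ (1 / 2 : ℝ) +
        (∑ i ∈ Finset.range N, v i ^ ρ) ^ (1 / ρ) := by
  calc (∑ i ∈ Finset.range N, t i ^ ρ) ^ (1 / ρ)
      ≤ (∑ i ∈ Finset.range N, ((p i + s i) + v i) ^ ρ) ^ (1 / ρ) := by
        refine ENNReal.rpow_le_rpow (Finset.sum_le_sum fun i hi => ?_) (by positivity)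
        exact ENNReal.rpow_le_rpow (h i (Finset.mem_range.1 hi)) (by linarith)
    _ ≤ (∑ i ∈ Finset.range N, (p i + s i) ^ ρ) ^ (1 / ρ) + _ :=
        ENNReal.Lp_add_le _ _ _ (by linarith)
    _ ≤ _ := by
        gcongr
        refine (ENNReal.Lp_add_le _ _ _ (by linarith)).trans ?_
        gcongr
        · refine (lsum_mono (σ := 1) one_pos (by linarith) N p).trans ?_
          simp
        · exact lsum_mono (σ := 2) two_pos hρ.le N s

lemma cs_lint {d : ℕ} (A : Set (Rd d)) (hA : MeasurableSet A) (φ w : Rd d → ℝ≥0∞)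
    (hφ : Measurable φ) (hw : Measurable w) (h : ∀ y ∈ A, w y ≠ 0 ∧ w y ≠ ∞) :
    (∫⁻ y in A, φ y) ^ (2 : ℝ) ≤ (∫⁻ y in A, φ y * (w y)⁻¹) * ∫⁻ y in A, φ y * w y := by
  have hc : Real.HolderConjugate 2 2 := Real.HolderConjugate.two_two
  have h1 := ENNReal.lintegral_mul_le_Lp_mul_Lq (volume.restrict A) hc
    (f := fun y => (φ y * (w y)⁻¹) ^ (1 / 2 : ℝ)) (g := fun y => (φ y * w y) ^ (1 / 2 : ℝ))
    (by fun_prop) (by fun_prop)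
  have h2 : ∫⁻ y in A, φ y = ∫⁻ y in A, ((fun y => (φ y * (w y)⁻¹) ^ (1 / 2 : ℝ)) *
      (fun y => (φ y * w y) ^ (1 / 2 : ℝ))) y := by
    refine setLIntegral_congr_fun hA (fun y hy => ?_)
    simp only [Pi.mul_apply]
    rw [← ENNReal.mul_rpow_of_nonneg _ _ (by norm_num)]
    have : φ y * (w y)⁻¹ * (φ y * w y) = φ y ^ (2 : ℝ) := by
      calc φ y * (w y)⁻¹ * (φ y * w y) = φ y * φ y * ((w y)⁻¹ * w y) := by ring
        _ = _ := by
          rw [ENNReal.inv_mul_cancel (h y hy).1 (h y hy).2, mul_one, ENNReal.rpow_two, sq]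
    rw [this, ← ENNReal.rpow_mul]
    norm_num
  rw [h2]
  calc _ ≤ _ := ENNReal.rpow_le_rpow h1 (by norm_num)
    _ = _ := by
      rw [ENNReal.mul_rpow_of_nonneg _ _ (by norm_num)]
      simp only [← ENNReal.rpow_mul]
      norm_num

lemma shell_l2 {d : ℕ} (N : ℕ) (A B : ℕ → Set (Rd d)) (hB : ∀ i, MeasurableSet (B i))
    (hA : ∀ i, MeasurableSet (A i)) (hBA : ∀ i, B i ⊆ A i)
    (hd : Pairwise (Function.onFun Disjoint A))
    (φ w : Rd d → ℝ≥0∞) (hφ : Measurable φ) (hw : Measurable w)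
    (h : ∀ i, ∀ y ∈ B i, w y ≠ 0 ∧ w y ≠ ∞) (F : ℝ≥0∞)
    (hF : ∀ i, ∫⁻ y in B i, φ y * (w y)⁻¹ ≤ F) :
    ∑ i ∈ Finset.range N, (∫⁻ y in B i, φ y) ^ (2 : ℝ) ≤ F * ∫⁻ y in ⋃ i, B i, φ y * w y := by
  have hdB : Pairwise (Function.onFun Disjoint B) := fun i j hij => (hd hij).mono (hBA i) (hBA j)
  calc ∑ i ∈ Finset.range N, (∫⁻ y in B i, φ y) ^ (2 : ℝ)
      ≤ ∑ i ∈ Finset.range N, F * ∫⁻ y in B i, φ y * w y := by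
        refine Finset.sum_le_sum (fun i _ => ?_)
        refine (cs_lint (B i) (hB i) φ w hφ hw (h i)).trans ?_
        gcongr
        exact hF i
    _ = F * ∑ i ∈ Finset.range N, ∫⁻ y in B i, φ y * w y := by rw [Finset.mul_sum]
    _ ≤ F * ∑' i, ∫⁻ y in B i, φ y * w y := by
        gcongr
        exact ENNReal.sum_le_tsum _
    _ = _ := by rw [lintegral_iUnion hB hdB]

/-! ### Variation -/

/-- annulus -/
def ann {d : ℕ} (x : Rd d) (e1 e0 : ℝ) : Set (Rd d) := {y | e1 < dist x y ∧ dist x y ≤ e0}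

lemma measurableSet_ann {d : ℕ} (x : Rd d) (e1 e0 : ℝ) : MeasurableSet (ann x e1 e0) := by
  have hm : Measurable (fun y : Rd d => dist x y) := by fun_prop
  exact (measurableSet_lt measurable_const hm).inter (measurableSet_le hm measurable_const)

lemma ann_disjoint {d : ℕ} (x : Rd d) {e : ℕ → ℝ} (he : Antitone e) :
    Pairwise (Function.onFun Disjoint (fun i => ann x (e (i + 1)) (e i))) := by
  have key : ∀ i j, i < j → Disjoint (ann x (e (i + 1)) (e i)) (ann x (e (j + 1)) (e j)) := by
    intro i j hij
    rw [Set.disjoint_left]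
    intro y h1 h2
    have := he (Nat.succ_le_of_lt hij)
    exact absurd (h1.1) (not_lt.2 (h2.2.trans this))
  intro i j hij
  rcases lt_or_gt_of_ne hij with h | h
  · exact key i j h
  · exact (key j i h).symm

lemma CZO.measK_left {d : ℕ} (S : CZO d) (x : Rd d) : Measurable (fun y => S.K x y) :=
  S.measK.comp (measurable_const.prodMk measurable_id)

lemma CZO.enorm_K_le {d : ℕ} (S : CZO d) {x y : Rd d} (h : 0 < dist x y) :
    ‖S.K x y‖ₑ ≤ ENNReal.ofReal S.Cst * ENNReal.ofReal ((dist x y ^ d)⁻¹) := by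
  rw [← ENNReal.ofReal_mul S.hCst.le, Real.enorm_eq_ofReal_abs]
  exact ENNReal.ofReal_le_ofReal (by simpa [div_eq_mul_inv] using S.size x y (dist_pos.1 h))

lemma CZO.integrableOn_K {d : ℕ} (S : CZO d) {h : Rd d → ℝ} (hh : Integrable h) (x : Rd d) {e : ℝ}
    (he : 0 < e) : IntegrableOn (fun y => S.K x y * h y) {y | e < dist x y} := by
  have hm : MeasurableSet {y : Rd d | e < dist x y} :=
    measurableSet_lt measurable_const (by fun_prop)
  refine Integrable.mono' ((hh.norm.const_mul (S.Cst / e ^ d)).integrableOn)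
    (((S.measK_left x).aestronglyMeasurable.mul hh.1).restrict) ?_
  filter_upwards [ae_restrict_mem hm] with y hy
  have hy' : e < dist x y := hy
  rw [norm_mul]
  gcongr
  have h0 : 0 < dist x y := he.trans hy'
  refine (S.size x y (dist_pos.1 h0)).trans ?_
  have := S.hCst
  gcongr

lemma CZO.trunc_sub {d : ℕ} (S : CZO d) {h : Rd d → ℝ} (hh : Integrable h) (x : Rd d) {e1 e0 : ℝ}
    (he : 0 < e1) (h01 : e1 ≤ e0) :
    S.trunc e1 h x - S.trunc e0 h x = ∫ y in ann x e1 e0, S.K x y * h y := by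
  unfold CZO.trunc
  have hu : {y : Rd d | e1 < dist x y} = ann x e1 e0 ∪ {y : Rd d | e0 < dist x y} := by
    ext y
    simp only [ann, mem_setOf_eq, mem_union]
    constructor
    · intro h
      rcases le_or_gt (dist x y) e0 with h' | h'
      · left; exact ⟨h, h'⟩
      · right; exact h'
    · rintro (h | h)
      · exact h.1
      · exact lt_of_le_of_lt h01 h
  have hI := S.integrableOn_K hh x he
  rw [hu, setIntegral_union]
  · ring
  · rw [Set.disjoint_left]
    intro y h1 h2
    exact absurd h1.2 (not_le.2 h2)
  · exact measurableSet_lt measurable_const (by fun_prop)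
  · exact hI.mono_set (fun y hy => hy.1)
  · exact hI.mono_set (fun y hy => lt_of_le_of_lt h01 hy)

/-- finite variation sums -/
def CZO.fv {d : ℕ} (S : CZO d) (ρ : ℝ) (N : ℕ) (e : ℕ → ℝ) (h : Rd d → ℝ) (x : Rd d) : ℝ≥0∞ :=
  (∑ i ∈ Finset.range N, ‖∫ y in ann x (e (i + 1)) (e i), S.K x y * h y‖ₑ ^ ρ) ^ (1 / ρ)

lemma CZO.var_le {d : ℕ} (S : CZO d) {ρ : ℝ} (hρ : 0 < ρ) {h : Rd d → ℝ} (hh : Integrable h) (x : Rd d)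
    (c : ℝ≥0∞) (H : ∀ (N : ℕ) (e : ℕ → ℝ), StrictAnti e → (∀ i, 0 < e i) →
      Tendsto e atTop (nhds 0) → S.fv ρ N e h x ≤ c) : S.var ρ h x ≤ c := by
  unfold CZO.var
  refine iSup₂_le (fun e he => ?_)
  rw [one_div, ENNReal.rpow_inv_le_iff hρ]
  refine ENNReal.tsum_le_of_sum_range_le (fun N => ?_)
  have := H N e he.1 he.2.1 he.2.2
  unfold CZO.fv at this
  rw [one_div, ENNReal.rpow_inv_le_iff hρ] at this
  convert this using 3 with i hi
  rw [S.trunc_sub hh x (he.2.1 _) (he.1.antitone (Nat.le_succ i)), Real.enorm_eq_ofReal_abs]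

lemma CZO.fv_le_var {d : ℕ} (S : CZO d) {ρ : ℝ} (hρ : 0 < ρ) {h : Rd d → ℝ} (hh : Integrable h) (x : Rd d)
    (N : ℕ) (e : ℕ → ℝ) (h1 : StrictAnti e) (h2 : ∀ i, 0 < e i)
    (h3 : Tendsto e atTop (nhds 0)) : S.fv ρ N e h x ≤ S.var ρ h x := by
  unfold CZO.var
  refine le_trans ?_ (le_iSup₂_of_le e ⟨h1, h2, h3⟩ le_rfl)
  unfold CZO.fv
  refine ENNReal.rpow_le_rpow ?_ (by positivity)
  refine le_trans (le_of_eq ?_) (ENNReal.sum_le_tsum (Finset.range N))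
  refine Finset.sum_congr rfl (fun i hi => ?_)
  rw [S.trunc_sub hh x (h2 _) (h1.antitone (Nat.le_succ i)), Real.enorm_eq_ofReal_abs]

lemma CZO.var_add_le {d : ℕ} (S : CZO d) {ρ : ℝ} (hρ : 2 < ρ) {h1 h2 h3 : Rd d → ℝ}
    (i1 : Integrable h1) (i2 : Integrable h2) (i3 : Integrable h3) (x : Rd d) (σ : ℝ) (hσ : |σ| = 1)
    (hs : ∀ y, h1 y = h2 y + σ * h3 y) : S.var ρ h1 x ≤ S.var ρ h2 x + S.var ρ h3 x := by
  have hρ0 : 0 < ρ := by linarith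
  refine S.var_le hρ0 i1 x _ (fun N e he1 he2 he3 => ?_)
  refine le_trans ?_ (add_le_add (S.fv_le_var hρ0 i2 x N e he1 he2 he3)
    (S.fv_le_var hρ0 i3 x N e he1 he2 he3))
  refine le_trans ?_ (ENNReal.Lp_add_le _ _ _ (by linarith))
  unfold CZO.fv
  refine ENNReal.rpow_le_rpow (Finset.sum_le_sum fun i hi => ?_) (by positivity)
  refine ENNReal.rpow_le_rpow ?_ (by linarith)
  have hsub : ann x (e (i + 1)) (e i) ⊆ {y | e (i + 1) < dist x y} := fun y hy => hy.1
  have k2 := (S.integrableOn_K i2 x (he2 (i + 1))).mono_set hsub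
  have k3 := (S.integrableOn_K i3 x (he2 (i + 1))).mono_set hsub
  have : ∫ y in ann x (e (i + 1)) (e i), S.K x y * h1 y =
      (∫ y in ann x (e (i + 1)) (e i), S.K x y * h2 y) +
        σ * ∫ y in ann x (e (i + 1)) (e i), S.K x y * h3 y := by
    rw [← integral_const_mul, ← integral_add k2 (k3.const_mul σ)]
    refine integral_congr_ae (Eventually.of_forall fun y => ?_)
    simp only [hs]
    ring
  rw [this]
  refine (enorm_add_le _ _).trans ?_
  rw [enorm_mul, Real.enorm_eq_ofReal_abs σ, hσ]
  simp

/-- extension of a finite rational sequence -/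
def extR (N : ℕ) (r : Fin (N + 1) → ℚ) (i : ℕ) : ℝ :=
  (r ⟨min i N, Nat.lt_succ_of_le (min_le_right i N)⟩ : ℝ) / 2 ^ (i - N)

lemma extR_pos {N : ℕ} {r : Fin (N + 1) → ℚ} (hr : ∀ i, 0 < r i) (i : ℕ) : 0 < extR N r i := by
  unfold extR
  have : (0 : ℝ) < r ⟨min i N, Nat.lt_succ_of_le (min_le_right i N)⟩ := by exact_mod_cast hr _
  positivity

lemma extR_anti {N : ℕ} {r : Fin (N + 1) → ℚ} (hr : ∀ i, 0 < r i) (ha : StrictAnti r) :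
    StrictAnti (extR N r) := by
  refine strictAnti_nat_of_succ_lt (fun i => ?_)
  rcases lt_or_ge i N with h | h
  · unfold extR
    have e1 : i + 1 - N = 0 := by omega
    have e2 : i - N = 0 := by omega
    rw [e1, e2]
    simp only [pow_zero, div_one, Rat.cast_lt]
    apply ha
    simp only [Fin.mk_lt_mk]
    omega
  · have e1 : i + 1 - N = (i - N) + 1 := by omega
    have h1 := extR_pos hr i
    have : extR N r (i + 1) = extR N r i / 2 := by
      unfold extR
      rw [e1, pow_succ]
      have : min (i + 1) N = min i N := by omega
      simp only [this]
      field_simp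
    rw [this]; linarith

lemma extR_tendsto {N : ℕ} (r : Fin (N + 1) → ℚ) :
    Tendsto (extR N r) atTop (nhds 0) := by
  have h : Tendsto (fun j : ℕ => (r ⟨N, Nat.lt_succ_self N⟩ : ℝ) / 2 ^ j) atTop (nhds 0) := by
    have := (tendsto_pow_atTop_nhds_zero_of_lt_one (r := (1/2 : ℝ)) (by norm_num) (by norm_num)).const_mul
      (r ⟨N, Nat.lt_succ_self N⟩ : ℝ)
    simpa [div_eq_mul_inv] using this
  have h2 := h.comp (tendsto_sub_atTop_nat N)
  refine h2.congr' ?_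
  filter_upwards [eventually_ge_atTop N] with i hi
  simp [extR, min_eq_right hi]

/-- The rational version of the variation. -/
def CZO.Vr {d : ℕ} (S : CZO d) (ρ : ℝ) (h : Rd d → ℝ) (x : Rd d) : ℝ≥0∞ :=
  ⨆ p : (Σ N : ℕ, {r : Fin (N + 1) → ℚ // StrictAnti r ∧ ∀ i, 0 < r i}),
    S.fv ρ p.1 (extR p.1 p.2.1) h x

lemma CZO.Vr_le_var {d : ℕ} (S : CZO d) {ρ : ℝ} (hρ : 0 < ρ) {h : Rd d → ℝ} (hh : Integrable h) (x : Rd d) :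
    S.Vr ρ h x ≤ S.var ρ h x := by
  refine iSup_le (fun p => ?_)
  exact S.fv_le_var hρ hh x _ _ (extR_anti p.2.2.2 p.2.2.1) (extR_pos p.2.2.2) (extR_tendsto _)

lemma CZO.measurable_Vr {d : ℕ} (S : CZO d) {ρ : ℝ} {h : Rd d → ℝ} (hh : Measurable h) :
    Measurable (S.Vr ρ h) := by
  refine Measurable.iSup (fun p => ?_)
  unfold CZO.fv
  refine Measurable.pow_const ?_ _
  refine Finset.measurable_sum _ (fun i _ => Measurable.pow_const ?_ _)
  refine Measurable.enorm ?_
  set e := extR p.1 p.2.1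
  have : (fun x => ∫ y in ann x (e (i + 1)) (e i), S.K x y * h y) =
      fun x => ∫ y, ({q : Rd d × Rd d | e (i + 1) < dist q.1 q.2 ∧ dist q.1 q.2 ≤ e i}.indicator
        (fun q => S.K q.1 q.2 * h q.2)) (x, y) := by
    ext x
    rw [← integral_indicator (measurableSet_ann _ _ _)]
    rfl
  rw [this]
  have hm : Measurable ({q : Rd d × Rd d | e (i + 1) < dist q.1 q.2 ∧ dist q.1 q.2 ≤ e i}.indicator
        (fun q => S.K q.1 q.2 * h q.2)) := by
    refine Measurable.indicator (S.measK.mul (hh.comp measurable_snd)) ?_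
    have hd : Measurable (fun q : Rd d × Rd d => dist q.1 q.2) := by fun_prop
    exact (measurableSet_lt measurable_const hd).inter (measurableSet_le hd measurable_const)
  exact (hm.stronglyMeasurable.integral_prod_right').measurable

lemma CZO.trunc_tendsto {d : ℕ} (S : CZO d) {h : Rd d → ℝ} (hh : Integrable h) (x : Rd d) {e : ℝ}
    (he : 0 < e) (r : ℕ → ℝ) (hr : ∀ n, e < r n) (hrt : Tendsto r atTop (nhds e)) :
    Tendsto (fun n => S.trunc (r n) h x) atTop (nhds (S.trunc e h x)) := by
  unfold CZO.trunc
  have hm : ∀ c : ℝ, MeasurableSet {y : Rd d | c < dist x y} := fun c =>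
    measurableSet_lt measurable_const (by fun_prop)
  simp only [← integral_indicator (hm _)]
  have hI := S.integrableOn_K hh x he
  refine tendsto_integral_of_dominated_convergence
    (fun y => ‖{y : Rd d | e < dist x y}.indicator (fun y => S.K x y * h y) y‖) ?_ ?_ ?_ ?_
  · intro n
    exact (((S.measK_left x).aestronglyMeasurable.mul hh.1).indicator (hm _))
  · exact ((integrable_indicator_iff (hm _)).2 hI).norm
  · intro n
    refine Eventually.of_forall (fun y => ?_)
    by_cases hy : y ∈ {y : Rd d | r n < dist x y}
    · have hy' : y ∈ {y : Rd d | e < dist x y} := lt_trans (hr n) hy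
      rw [indicator_of_mem hy, indicator_of_mem hy']
    · rw [indicator_of_notMem hy]; simp
  · refine Eventually.of_forall (fun y => ?_)
    by_cases hy : e < dist x y
    · have : ∀ᶠ n in atTop, r n < dist x y := (tendsto_order.1 hrt).2 _ hy
      refine tendsto_const_nhds.congr' ?_
      filter_upwards [this] with n hn
      rw [indicator_of_mem (show y ∈ {y : Rd d | e < dist x y} from hy),
        indicator_of_mem (show y ∈ {y : Rd d | r n < dist x y} from hn)]
    · refine tendsto_const_nhds.congr (fun n => ?_)
      rw [indicator_of_notMem (show y ∉ {y : Rd d | e < dist x y} from hy),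
        indicator_of_notMem (show y ∉ {y : Rd d | r n < dist x y} from
          fun h => hy (lt_trans (hr n) h))]

lemma CZO.fv_le_Vr {d : ℕ} (S : CZO d) {ρ : ℝ} (hρ : 0 < ρ) {h : Rd d → ℝ} (hh : Integrable h) (x : Rd d)
    (N : ℕ) (e : ℕ → ℝ) (he : Antitone e) (hpos : ∀ i, 0 < e i) :
    S.fv ρ N e h x ≤ S.Vr ρ h x := by
  have hex : ∀ (n : ℕ) (i : Fin (N + 1)), ∃ r : ℚ,
      e i + ((N : ℝ) - (i : ℕ)) / (n + 1) < r ∧ (r : ℝ) < e i + ((N : ℝ) - (i : ℕ) + 1) / (n + 1) := by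
    intro n i
    apply exists_rat_btwn
    have : (0 : ℝ) < n + 1 := by positivity
    gcongr
    linarith
  choose r hr1 hr2 using hex
  have hNi : ∀ i : Fin (N + 1), (0 : ℝ) ≤ (N : ℝ) - (i : ℕ) := by
    intro i
    have : (i : ℕ) ≤ N := Nat.le_of_lt_succ i.2
    have : ((i : ℕ) : ℝ) ≤ N := by exact_mod_cast this
    linarith
  have hre : ∀ (n : ℕ) (i : Fin (N + 1)), e i < r n i := by
    intro n i
    refine lt_of_le_of_lt ?_ (hr1 n i)
    have := hNi i
    have : 0 ≤ ((N : ℝ) - (i : ℕ)) / (n + 1) := by positivity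
    linarith
  have hrpos : ∀ n i, 0 < r n i := by
    intro n i
    have := (hpos i).trans (hre n i)
    exact_mod_cast this
  have hranti : ∀ n, StrictAnti (r n) := by
    intro n i j hij
    have h1 := hr2 n j
    have h2 := hr1 n i
    have h3 : e j ≤ e i := he (le_of_lt hij)
    have h4 : ((N : ℝ) - (j : ℕ) + 1) / (n + 1) ≤ ((N : ℝ) - (i : ℕ)) / (n + 1) := by
      have : ((i : ℕ) : ℝ) + 1 ≤ (j : ℕ) := by exact_mod_cast hij
      gcongr
      linarith
    have : (r n j : ℝ) < r n i := by linarith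
    exact_mod_cast this
  have hrt : ∀ i : Fin (N + 1), Tendsto (fun n => (r n i : ℝ)) atTop (nhds (e i)) := by
    intro i
    have hz : Tendsto (fun n : ℕ => e i + ((N : ℝ) - (i : ℕ) + 1) / ((n : ℝ) + 1)) atTop (nhds (e i)) := by
      have := (tendsto_one_div_add_atTop_nhds_zero_nat (𝕜 := ℝ)).const_mul ((N : ℝ) - (i : ℕ) + 1)
      have := this.const_add (e i)
      simpa [div_eq_mul_inv] using this
    exact tendsto_of_tendsto_of_tendsto_of_le_of_le tendsto_const_nhds hz
      (fun n => (hre n i).le) (fun n => (hr2 n i).le)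
  have hT : Tendsto (fun n => S.fv ρ N (extR N (r n)) h x) atTop (nhds (S.fv ρ N e h x)) := by
    unfold CZO.fv
    refine (ENNReal.continuous_rpow_const.tendsto _).comp ?_
    refine tendsto_finsetSum _ (fun i hi => ?_)
    refine (ENNReal.continuous_rpow_const.tendsto _).comp ?_
    refine (continuous_enorm.tendsto _).comp ?_
    have hiN : i < N := Finset.mem_range.1 hi
    rw [← S.trunc_sub hh x (hpos _) (he (Nat.le_succ i))]
    have hE : ∀ n, ∀ j (hj : j ≤ N), extR N (r n) j = r n ⟨j, Nat.lt_succ_of_le hj⟩ := by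
      intro n j hj
      simp [extR, min_eq_left hj, Nat.sub_eq_zero_of_le hj]
    have hq : ∀ n, ∫ y in ann x (extR N (r n) (i + 1)) (extR N (r n) i), S.K x y * h y =
        S.trunc (extR N (r n) (i + 1)) h x - S.trunc (extR N (r n) i) h x := by
      intro n
      rw [S.trunc_sub hh x (extR_pos (hrpos n) _) ((extR_anti (hrpos n) (hranti n)).antitone (Nat.le_succ i))]
    simp only [hq]
    have hlim : ∀ j (hj : j ≤ N), Tendsto (fun n => S.trunc (extR N (r n) j) h x) atTop
        (nhds (S.trunc (e j) h x)) := by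
      intro j hj
      simp only [hE _ j hj]
      exact S.trunc_tendsto hh x (hpos j) _ (fun n => hre n ⟨j, _⟩) (hrt ⟨j, _⟩)
    exact (hlim (i + 1) hiN).sub (hlim i hiN.le)
  refine le_of_tendsto' hT (fun n => ?_)
  exact le_iSup (fun p : (Σ N : ℕ, {r : Fin (N + 1) → ℚ // StrictAnti r ∧ ∀ i, 0 < r i}) =>
    S.fv ρ p.1 (extR p.1 p.2.1) h x) ⟨N, ⟨r n, hranti n, hrpos n⟩⟩

/-! ### The good part -/

lemma CZO.wt_eq {d : ℕ} (S : CZO d) {a : ℝ} {x y : Rd d} (h : a / dist x y < 1) :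
    S.wt a x y = ENNReal.ofReal ((dist x y ^ d)⁻¹) * ENNReal.ofReal (S.W (a / dist x y)) := by
  unfold CZO.wt
  rw [indicator_of_mem (by simpa using h)]

lemma rpow_half_ofReal (t : ℝ) (ht : 0 ≤ t) :
    (ENNReal.ofReal t) ^ (1 / 2 : ℝ) = ENNReal.ofReal (Real.sqrt t) := by
  rw [ENNReal.ofReal_rpow_of_nonneg ht (by norm_num), Real.sqrt_eq_rpow]

lemma sum_lint_le {d : ℕ} (N : ℕ) {A : ℕ → Set (Rd d)} (hA : ∀ i, MeasurableSet (A i))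
    (hd : Pairwise (Function.onFun Disjoint A)) (f : Rd d → ℝ≥0∞) :
    ∑ i ∈ Finset.range N, ∫⁻ y in A i, f y ≤ ∫⁻ y, f y := by
  calc _ ≤ ∑' i, ∫⁻ y in A i, f y := ENNReal.sum_le_tsum _
    _ = ∫⁻ y in ⋃ i, A i, f y := (lintegral_iUnion hA hd f).symm
    _ ≤ _ := setLIntegral_le_lintegral _ _

lemma shell_half {δ ε t : ℝ} (ht : 4 * δ < t) (hδ : 0 < δ) (h : |t - ε| ≤ δ) :
    ε / t ∈ Icc (1 / 2 : ℝ) 2 ∧ |1 - ε / t| ≤ δ / t := by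
  have ht0 : 0 < t := by linarith
  have := abs_le.1 h
  refine ⟨⟨?_, ?_⟩, ?_⟩
  · rw [le_div_iff₀ ht0]; linarith
  · rw [div_le_iff₀ ht0]; linarith
  · have : 1 - ε / t = (t - ε) / t := by field_simp
    rw [this, abs_div, abs_of_pos ht0]
    gcongr

lemma shell_est {d : ℕ} (hd : 0 < d) (S : CZO d) : ∃ C : ℝ≥0∞, C ≠ ∞ ∧
    ∀ (z z' : Rd d) (δ : ℝ), 0 < δ → dist z z' ≤ δ → ∀ (N : ℕ) (e : ℕ → ℝ), Antitone e →
    (∀ i, 4 * δ ≤ e i) →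
    ∑ i ∈ Finset.range N, (∫⁻ y in ann z (e (i + 1)) (e i) \ ann z' (e (i + 1)) (e i),
      ENNReal.ofReal ((dist z y ^ d)⁻¹)) ^ (2 : ℝ) ≤ C := by
  obtain ⟨Cs, hCs, hshell⟩ := shell_lint d hd
  obtain ⟨Cw, hCw, hdini⟩ := S.dini_lint hd
  refine ⟨(Cs + Cs) * Cw, ENNReal.mul_ne_top (by simp [hCs]) hCw, ?_⟩
  intro z z' δ hδ hzz N e he he4
  have hm : Measurable (fun y : Rd d => dist z y) := by fun_prop
  have hbig : ∀ i, ∀ y ∈ ann z (e (i + 1)) (e i), 4 * δ < dist z y := fun i y hy =>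
    (he4 _).trans_lt hy.1
  refine (shell_l2 N (fun i => ann z (e (i + 1)) (e i))
    (fun i => ann z (e (i + 1)) (e i) \ ann z' (e (i + 1)) (e i))
    (fun i => (measurableSet_ann _ _ _).diff (measurableSet_ann _ _ _))
    (fun i => measurableSet_ann _ _ _) (fun i => sdiff_subset) (ann_disjoint z he)
    (fun y => ENNReal.ofReal ((dist z y ^ d)⁻¹))
    (fun y => (ENNReal.ofReal (δ / dist z y)) ^ (1 / 2 : ℝ))
    (by fun_prop) (by fun_prop) ?_ (Cs + Cs) ?_).trans ?_
  · intro i y hy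
    have h4 := hbig i y hy.1
    have : 0 < δ / dist z y := div_pos hδ (by linarith)
    rw [rpow_half_ofReal _ this.le]
    refine ⟨?_, ENNReal.ofReal_ne_top⟩
    simpa using Real.sqrt_pos.2 this
  · intro i
    have hsub : ∀ y ∈ ann z (e (i + 1)) (e i) \ ann z' (e (i + 1)) (e i),
        |dist z y - e (i + 1)| ≤ δ ∨ |dist z y - e i| ≤ δ := by
      rintro y ⟨⟨h1, h2⟩, h3⟩
      have t1 : dist z y ≤ dist z z' + dist z' y := dist_triangle _ _ _
      have t2 : dist z' y ≤ dist z z' + dist z y := by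
        rw [dist_comm z z']; exact dist_triangle _ _ _
      by_cases hc : e (i + 1) < dist z' y
      · right
        have : e i < dist z' y := by
          by_contra h; exact h3 ⟨hc, not_lt.1 h⟩
        rw [abs_le]; constructor <;> linarith
      · left
        rw [abs_le]; constructor <;> linarith
    have hmT : ∀ ε : ℝ, MeasurableSet {y : Rd d | 4 * δ < dist z y ∧ |dist z y - ε| ≤ δ} := fun ε =>
      (measurableSet_lt measurable_const hm).inter (measurableSet_le (continuous_abs.measurable.comp (hm.sub_const ε)) measurable_const)
    have hT : ∀ ε, 0 < ε → ∫⁻ y in {y : Rd d | 4 * δ < dist z y ∧ |dist z y - ε| ≤ δ},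
        ENNReal.ofReal ((dist z y ^ d)⁻¹) * ((ENNReal.ofReal (δ / dist z y)) ^ (1 / 2 : ℝ))⁻¹ ≤ Cs := by
      intro ε hε
      refine le_trans ?_ (hshell ε hε z)
      refine le_trans (setLIntegral_mono' (hmT ε) (g := fun y => ENNReal.ofReal ((dist z y ^ d)⁻¹) *
          (ENNReal.ofReal |1 - ε / dist z y|) ^ (-(1/2) : ℝ)) ?_) ?_
      · rintro y ⟨h1, h2⟩
        have := (shell_half h1 hδ h2).2
        gcongr
        rw [ENNReal.rpow_neg, ENNReal.inv_le_inv]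
        gcongr
      · exact lintegral_mono_set (fun y hy => (shell_half hy.1 hδ hy.2).1)
    calc _ ≤ ∫⁻ y in {y : Rd d | 4 * δ < dist z y ∧ |dist z y - e (i + 1)| ≤ δ} ∪
          {y : Rd d | 4 * δ < dist z y ∧ |dist z y - e i| ≤ δ},
          ENNReal.ofReal ((dist z y ^ d)⁻¹) * ((ENNReal.ofReal (δ / dist z y)) ^ (1 / 2 : ℝ))⁻¹ := by
          refine lintegral_mono_set (fun y hy => ?_)
          rcases hsub y hy with h | h
          · exact Or.inl ⟨hbig i y hy.1, h⟩
          · exact Or.inr ⟨hbig i y hy.1, h⟩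
      _ ≤ _ := lintegral_union_le _ _ _
      _ ≤ Cs + Cs := add_le_add (hT _ (by linarith [he4 (i+1)])) (hT _ (by linarith [he4 i]))
  · gcongr
    refine le_trans ?_ (hdini δ hδ z)
    refine le_trans (setLIntegral_mono' (g := fun y => S.wt δ z y) ?_ ?_) (setLIntegral_le_lintegral _ _)
    · exact MeasurableSet.iUnion fun i => (measurableSet_ann _ _ _).diff (measurableSet_ann _ _ _)
    · intro y hy
      obtain ⟨i, hi⟩ := mem_iUnion.1 hy
      have h4 := hbig i y hi.1
      have h0 : 0 < dist z y := by linarith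
      rw [S.wt_eq (by rw [div_lt_one h0]; linarith), rpow_half_ofReal _ (by positivity)]
      gcongr
      exact S.sqrt_le_W

lemma CZO.ofReal_le_wt {d : ℕ} (S : CZO d) {r c : ℝ} (hr : 0 < r) {x y : Rd d}
    (h1 : r ≤ dist x y) (h2 : dist x y ≤ c * r) :
    ENNReal.ofReal ((dist x y ^ d)⁻¹) ≤ ENNReal.ofReal (Real.sqrt (2 * c)) * S.wt (r / 2) x y := by
  have h0 : 0 < dist x y := by linarith
  have hc : 0 < c := by
    by_contra h
    nlinarith
  rw [S.wt_eq (by rw [div_lt_one h0]; linarith), mul_left_comm, ← ENNReal.ofReal_mul (by positivity)]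
  have : (1 : ℝ) ≤ Real.sqrt (2 * c) * S.W (r / 2 / dist x y) := by
    calc (1 : ℝ) = Real.sqrt (2 * c) * Real.sqrt ((2 * c)⁻¹) := by
          rw [← Real.sqrt_mul (by positivity), mul_inv_cancel₀ (by positivity), Real.sqrt_one]
      _ ≤ Real.sqrt (2 * c) * Real.sqrt (r / 2 / dist x y) := by
          gcongr
          rw [inv_eq_one_div, div_le_div_iff₀ (by positivity) h0]
          linarith
      _ ≤ _ := by gcongr; exact S.sqrt_le_W
  calc _ = ENNReal.ofReal ((dist x y ^ d)⁻¹) * ENNReal.ofReal 1 := by simp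
    _ ≤ _ := by gcongr

lemma CZO.enorm_smooth {d : ℕ} (S : CZO d) {x x' y : Rd d} {δ : ℝ} (h0 : 0 < dist x y)
    (h1 : dist x x' ≤ dist x y / 2) (h2 : dist x x' ≤ δ) (h3 : δ < dist x y) :
    ‖S.K x y - S.K x' y‖ₑ ≤ ENNReal.ofReal S.Cst * S.wt δ x y ∧
    ‖S.K y x - S.K y x'‖ₑ ≤ ENNReal.ofReal S.Cst * S.wt δ x y := by
  have key : |S.K x y - S.K x' y| + |S.K y x - S.K y x'| ≤
      S.Cst * ((dist x y ^ d)⁻¹ * S.W (δ / dist x y)) := by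
    refine (S.smooth x x' y (dist_pos.1 h0) h1).trans ?_
    rw [div_eq_mul_inv, mul_assoc, mul_comm (S.ω _)]
    have := S.hCst
    gcongr
    exact (S.ω_le_W (by positivity)).trans (S.W_mono (by gcongr))
  have e : ENNReal.ofReal S.Cst * S.wt δ x y =
      ENNReal.ofReal (S.Cst * ((dist x y ^ d)⁻¹ * S.W (δ / dist x y))) := by
    rw [S.wt_eq (by rwa [div_lt_one h0]), ENNReal.ofReal_mul S.hCst.le,
      ENNReal.ofReal_mul (by positivity)]
  rw [e, Real.enorm_eq_ofReal_abs, Real.enorm_eq_ofReal_abs]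
  constructor
  · apply ENNReal.ofReal_le_ofReal
    linarith [abs_nonneg (S.K y x - S.K y x')]
  · apply ENNReal.ofReal_le_ofReal
    linarith [abs_nonneg (S.K x y - S.K x' y)]

lemma CZO.good_est {d : ℕ} (hd : 0 < d) (S : CZO d) {ρ : ℝ} (hρ : 2 < ρ) : ∃ C : ℝ≥0∞, C ≠ ∞ ∧
    ∀ (g : Rd d → ℝ) (M : ℝ), Measurable g → Integrable g → (∀ᵐ y, |g y| ≤ M) →
    ∀ (R : Cube d) (x ξ : Rd d), x ∈ R.set → ξ ∈ R.set →
    S.var ρ ((R.dilate 3)ᶜ.indicator g) ξ ≤ S.Vr ρ g x + C * ENNReal.ofReal M := by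
  obtain ⟨Ce, hCe, hest⟩ := shell_est hd S
  obtain ⟨Cw, hCw, hdini⟩ := S.dini_lint hd
  set D : ℝ := Real.sqrt d with hD
  have hD1 : 1 ≤ D := by
    rw [hD]; exact Real.one_le_sqrt.2 (by exact_mod_cast hd)
  set k1 : ℝ≥0∞ := ENNReal.ofReal S.Cst with hk1
  have hk1t : k1 ≠ ∞ := ENNReal.ofReal_ne_top
  set c1 : ℝ≥0∞ := ENNReal.ofReal (Real.sqrt (2 * (4 * D))) with hc1
  have hc1t : c1 ≠ ∞ := ENNReal.ofReal_ne_top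
  set c2 : ℝ≥0∞ := ENNReal.ofReal (2 ^ d) with hc2
  have hc2t : c2 ≠ ∞ := ENNReal.ofReal_ne_top
  refine ⟨k1 * (c1 * Cw + Cw) + k1 * (c2 * Ce ^ (1 / 2 : ℝ) + Ce ^ (1 / 2 : ℝ)), ?_, ?_⟩
  · have := ENNReal.rpow_ne_top_of_nonneg (y := 1 / 2) (by norm_num) hCe
    finiteness
  intro g M hgm hgi hgM R x ξ hx hξ
  have hr : 0 < R.l := R.hl
  set r := R.l with hrdef
  set δ : ℝ := D * r with hδdef
  have hδ : 0 < δ := by positivity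
  have hrδ : r ≤ δ := by nlinarith
  have hxξ : dist ξ x ≤ δ := R.dist_le hξ hx
  have hMe : ∀ᵐ y, ‖g y‖ₑ ≤ ENNReal.ofReal M := by
    filter_upwards [hgM] with y hy
    rw [Real.enorm_eq_ofReal_abs]; exact ENNReal.ofReal_le_ofReal hy
  have hm3 := (R.measurableSet_dilate 3).compl
  have hhi : Integrable ((R.dilate 3)ᶜ.indicator g) := hgi.indicator hm3
  refine S.var_le (by linarith) hhi ξ _ (fun N e he hpos hlim => ?_)
  set e' : ℕ → ℝ := fun i => max (e i) (4 * δ) with he'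
  have he'a : Antitone e' := fun i j hij => max_le_max (he.antitone hij) le_rfl
  have he'4 : ∀ i, 4 * δ ≤ e' i := fun i => le_max_right _ _
  have he'p : ∀ i, 0 < e' i := fun i => by have := he'4 i; linarith
  set A : ℕ → Set (Rd d) := fun i => ann ξ (e (i + 1)) (e i) with hA
  set A' : ℕ → Set (Rd d) := fun i => ann ξ (e' (i + 1)) (e' i) with hA'
  set B' : ℕ → Set (Rd d) := fun i => ann x (e' (i + 1)) (e' i) with hB'
  have mA : ∀ i, MeasurableSet (A i) := fun i => measurableSet_ann _ _ _
  have mA' : ∀ i, MeasurableSet (A' i) := fun i => measurableSet_ann _ _ _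
  have mB' : ∀ i, MeasurableSet (B' i) := fun i => measurableSet_ann _ _ _
  have hA'big : ∀ i, ∀ y ∈ A' i, 4 * δ < dist ξ y := fun i y hy => (he'4 _).trans_lt hy.1
  have hB'big : ∀ i, ∀ y ∈ B' i, 4 * δ < dist x y := fun i y hy => (he'4 _).trans_lt hy.1
  have hA'A : ∀ i, A' i ⊆ A i := by
    intro i y hy
    have h4 := hA'big i y hy
    refine ⟨(le_max_left _ _).trans_lt hy.1, ?_⟩
    rcases le_max_iff.1 hy.2 with h | h
    · exact h
    · linarith
  have hAA' : ∀ i, ∀ y ∈ A i \ A' i, dist ξ y ≤ 4 * δ := by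
    rintro i y ⟨⟨h1, h2⟩, h3⟩
    by_contra h
    push Not at h
    exact h3 ⟨max_lt h1 h, h2.trans (le_max_left _ _)⟩
  have hfar : ∀ y, 4 * δ < dist ξ y → y ∉ R.dilate 3 := by
    intro y hy h3
    have := R.dist_le_three hξ h3
    have : Real.sqrt d * (2 * R.l) = 2 * δ := by rw [hδdef, hD, hrdef]; ring
    linarith
  have hxA' : ∀ i, ∀ y ∈ A' i, 3 * δ < dist x y := by
    intro i y hy
    have := hA'big i y hy
    have := dist_triangle ξ x y
    linarith
  set H : Rd d → ℝ≥0∞ := fun y => ENNReal.ofReal M * (k1 * (c1 * S.wt (r / 2) ξ y + S.wt δ ξ y)) with hH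
  set φ : Rd d → Rd d → ℝ≥0∞ := fun z y => ENNReal.ofReal ((dist z y ^ d)⁻¹) with hφ
  have ih : ∀ i, IntegrableOn (fun y => S.K ξ y * (R.dilate 3)ᶜ.indicator g y) (A i) := fun i =>
    (S.integrableOn_K hhi ξ (hpos (i + 1))).mono_set (fun y hy => hy.1)
  have ig1 : ∀ i, IntegrableOn (fun y => S.K ξ y * g y) (A' i) := fun i =>
    (S.integrableOn_K hgi ξ (he'p (i + 1))).mono_set (fun y hy => hy.1)
  have ig2 : ∀ i, IntegrableOn (fun y => S.K x y * g y) (A' i) := fun i =>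
    (S.integrableOn_K hgi x (e := 3 * δ) (by positivity)).mono_set (fun y hy => hxA' i y hy)
  have ig3 : ∀ i, IntegrableOn (fun y => S.K x y * g y) (B' i) := fun i =>
    (S.integrableOn_K hgi x (he'p (i + 1))).mono_set (fun y hy => hy.1)
  -- decomposition
  have hdec : ∀ i, ∫ y in A i, S.K ξ y * (R.dilate 3)ᶜ.indicator g y =
      (∫ y in A i \ A' i, S.K ξ y * (R.dilate 3)ᶜ.indicator g y) +
      (∫ y in A' i, (S.K ξ y - S.K x y) * g y) +
      ((∫ y in A' i \ B' i, S.K x y * g y) - (∫ y in B' i \ A' i, S.K x y * g y)) +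
      ∫ y in B' i, S.K x y * g y := by
    intro i
    have s1 : ∫ y in A i, S.K ξ y * (R.dilate 3)ᶜ.indicator g y =
        (∫ y in A i \ A' i, S.K ξ y * (R.dilate 3)ᶜ.indicator g y) +
        ∫ y in A' i, S.K ξ y * (R.dilate 3)ᶜ.indicator g y := by
      rw [← setIntegral_union disjoint_sdiff_left (mA' i) ((ih i).mono_set sdiff_subset)
        ((ih i).mono_set (hA'A i)), sdiff_union_of_subset (hA'A i)]
    have s2 : ∫ y in A' i, S.K ξ y * (R.dilate 3)ᶜ.indicator g y = ∫ y in A' i, S.K ξ y * g y := by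
      refine setIntegral_congr_fun (mA' i) (fun y hy => ?_)
      rw [indicator_of_mem (hfar y (hA'big i y hy))]
    have s3 : ∫ y in A' i, S.K ξ y * g y = (∫ y in A' i, (S.K ξ y - S.K x y) * g y) +
        ∫ y in A' i, S.K x y * g y := by
      rw [← integral_add _ (ig2 i)]
      · congr 1; ext y; ring
      · refine Integrable.congr ((ig1 i).sub (ig2 i)) (ae_of_all _ fun y => ?_)
        simp only [Pi.sub_apply]; ring
    have s4 : ∫ y in A' i, S.K x y * g y = (∫ y in A' i \ B' i, S.K x y * g y) +
        ∫ y in A' i ∩ B' i, S.K x y * g y := by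
      rw [add_comm, integral_inter_add_sdiff (mB' i) (ig2 i)]
    have s5 : ∫ y in B' i, S.K x y * g y = (∫ y in B' i \ A' i, S.K x y * g y) +
        ∫ y in A' i ∩ B' i, S.K x y * g y := by
      rw [add_comm, inter_comm, integral_inter_add_sdiff (mA' i) (ig3 i)]
    rw [s1, s2, s3, s4, s5]; ring
  set s1 : ℕ → ℝ≥0∞ := fun i => ENNReal.ofReal M * k1 * c2 * ∫⁻ y in A' i \ B' i, φ ξ y with hs1
  set s2 : ℕ → ℝ≥0∞ := fun i => ENNReal.ofReal M * k1 * ∫⁻ y in B' i \ A' i, φ x y with hs2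
  have hterm : ∀ i < N, ‖∫ y in A i, S.K ξ y * (R.dilate 3)ᶜ.indicator g y‖ₑ ≤
      (∫⁻ y in A i, H y) + (s1 i + s2 i) + ‖∫ y in B' i, S.K x y * g y‖ₑ := by
    intro i _
    rw [hdec i]
    refine (enorm_add_le _ _).trans ?_
    gcongr
    refine (enorm_add_le _ _).trans ?_
    refine add_le_add ((enorm_add_le _ _).trans ?_) ((enorm_sub_le).trans ?_)
    · -- local and kernel difference parts
      have e1 : (∫⁻ y in A i, H y) = (∫⁻ y in A i \ A' i, H y) + ∫⁻ y in A' i, H y := by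
        rw [← lintegral_union (mA' i) disjoint_sdiff_left, sdiff_union_of_subset (hA'A i)]
      rw [e1]
      refine add_le_add ((enorm_integral_le_lintegral_enorm _).trans ?_)
        ((enorm_integral_le_lintegral_enorm _).trans ?_)
      · refine lintegral_mono_ae ?_
        filter_upwards [ae_restrict_mem ((mA i).diff (mA' i)), ae_restrict_of_ae hMe] with y hy hyM
        by_cases h3 : y ∈ R.dilate 3
        · simp [h3]
        · rw [indicator_of_mem h3, enorm_mul, mul_comm]
          have hl := R.l_le_dist hξ h3
          have h4 := hAA' i y hy
          simp only [hH]
          gcongr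
          calc _ ≤ _ := S.enorm_K_le (lt_of_lt_of_le hr hl)
            _ ≤ k1 * (c1 * S.wt (r / 2) ξ y) := by
                gcongr
                exact S.ofReal_le_wt hr hl (by rw [hδdef] at h4; linarith)
            _ ≤ _ := by gcongr; exact le_self_add
      · refine lintegral_mono_ae ?_
        filter_upwards [ae_restrict_mem (mA' i), ae_restrict_of_ae hMe] with y hy hyM
        rw [enorm_mul, mul_comm]
        have h4 := hA'big i y hy
        simp only [hH]
        gcongr
        refine (S.enorm_smooth (by linarith) (by linarith) hxξ (by linarith)).1.trans ?_
        gcongr; exact le_add_self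
    · refine add_le_add ((enorm_integral_le_lintegral_enorm _).trans ?_)
        ((enorm_integral_le_lintegral_enorm _).trans ?_)
      · simp only [hs1]
        rw [← lintegral_const_mul _ (by fun_prop)]
        refine lintegral_mono_ae ?_
        filter_upwards [ae_restrict_mem ((mA' i).diff (mB' i)), ae_restrict_of_ae hMe] with y hy hyM
        have h3 := hxA' i y hy.1
        have h4 := hA'big i y hy.1
        have h5 := dist_triangle ξ x y
        have h0 : 0 < dist x y := by linarith
        have h0' : 0 < dist ξ y := by linarith
        rw [enorm_mul, mul_comm, mul_assoc, mul_assoc]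
        gcongr
        refine (S.enorm_K_le h0).trans ?_
        gcongr
        rw [hc2, ← ENNReal.ofReal_mul (by positivity)]
        apply ENNReal.ofReal_le_ofReal
        rw [inv_le_iff_one_le_mul₀ (by positivity), mul_right_comm, ← div_eq_mul_inv,
          one_le_div (by positivity), ← mul_pow]
        gcongr
        linarith
      · simp only [hs2]
        rw [← lintegral_const_mul _ (by fun_prop)]
        refine lintegral_mono_ae ?_
        filter_upwards [ae_restrict_mem ((mB' i).diff (mA' i)), ae_restrict_of_ae hMe] with y hy hyM
        have h4 := hB'big i y hy.1
        rw [enorm_mul, mul_comm, mul_assoc]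
        gcongr
        exact S.enorm_K_le (by linarith)
  have hmain := lsum_comb hρ N _ _ _ _ hterm
  refine (show S.fv ρ N e _ ξ ≤ _ from hmain).trans ?_
  rw [add_comm (S.Vr ρ g x)]
  gcongr
  · rw [add_mul]
    gcongr
    · refine (sum_lint_le N mA (ann_disjoint ξ he.antitone) H).trans ?_
      simp only [hH]
      have mw : ∀ a, Measurable (fun y => S.wt a ξ y) := by
        intro a
        unfold CZO.wt
        have : Measurable ((Iio (1 : ℝ)).indicator (fun s => ENNReal.ofReal (S.W s))) :=
          Measurable.indicator S.W_mono.measurable.ennreal_ofReal measurableSet_Iio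
        fun_prop
      have := mw (r / 2)
      have := mw δ
      rw [lintegral_const_mul _ (by fun_prop), lintegral_const_mul _ (by fun_prop),
        lintegral_add_left (by fun_prop), lintegral_const_mul _ (by fun_prop), mul_comm]
      gcongr
      · exact hdini _ (by positivity) ξ
      · exact hdini _ hδ ξ
    · refine (ENNReal.Lp_add_le _ _ _ (by norm_num)).trans ?_
      have q1 : ∀ (c : ℝ≥0∞) (a : ℕ → ℝ≥0∞) , ∑ i ∈ Finset.range N, a i ^ (2 : ℝ) ≤ Ce →
          (∑ i ∈ Finset.range N, (c * a i) ^ (2 : ℝ)) ^ (1 / 2 : ℝ) ≤ c * Ce ^ (1 / 2 : ℝ) := by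
        intro c a ha
        have : ∑ i ∈ Finset.range N, (c * a i) ^ (2 : ℝ) =
            c ^ (2 : ℝ) * ∑ i ∈ Finset.range N, a i ^ (2 : ℝ) := by
          rw [Finset.mul_sum]
          exact Finset.sum_congr rfl fun i _ => ENNReal.mul_rpow_of_nonneg _ _ (by norm_num)
        rw [this, ENNReal.mul_rpow_of_nonneg _ _ (by norm_num), ← ENNReal.rpow_mul,
          show (2 : ℝ) * (1 / 2) = 1 by norm_num, ENNReal.rpow_one]
        gcongr
      calc _ ≤ ENNReal.ofReal M * k1 * c2 * Ce ^ (1 / 2 : ℝ) + ENNReal.ofReal M * k1 * Ce ^ (1 / 2 : ℝ) := by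
            gcongr
            · exact q1 _ _ (hest ξ x δ hδ hxξ N e' he'a he'4)
            · exact q1 _ _ (hest x ξ δ hδ (by rwa [dist_comm]) N e' he'a he'4)
        _ = _ := by ring
  · exact S.fv_le_Vr (by linarith) hgi x N e' he'a he'p

/-! ### The bad part -/

structure BadData {d : ℕ} (P : Set (Cube d)) (b u : Rd d → ℝ) (κ : ℝ≥0∞) : Prop where
  cnt : P.Countable
  disj : P.PairwiseDisjoint Cube.set
  bm : Measurable b
  bi : Integrable b
  b0 : ∀ y, (∀ Q ∈ P, y ∉ Q.set) → b y = 0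
  bint : ∀ Q ∈ P, ∫ y in Q.set, b y = 0
  bK : ∀ Q ∈ P, ∫⁻ y in Q.set, ‖b y‖ₑ ≤ κ * Q.vol
  um : Measurable u
  uP : ∀ Q ∈ P, ∀ y ∈ Q.set, u y = Q.l

lemma enorm_int_iUnion {d : ℕ} {ι : Type*} [Countable ι] {s : ι → Set (Rd d)}
    (hs : ∀ i, MeasurableSet (s i)) (hd : Pairwise (Function.onFun Disjoint s)) {F : Rd d → ℝ}
    (hF : IntegrableOn F (⋃ i, s i)) :
    ‖∫ y in ⋃ i, s i, F y‖ₑ ≤ ∑' i, ‖∫ y in s i, F y‖ₑ := by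
  rw [integral_iUnion hs hd hF]
  exact enorm_tsum_le_tsum_enorm

lemma sqrt_mul_le_add (p q : ℝ≥0∞) : (p * q) ^ (1 / 2 : ℝ) ≤ p + q := by
  calc (p * q) ^ (1 / 2 : ℝ) ≤ ((p + q) * (p + q)) ^ (1 / 2 : ℝ) := by
        gcongr
        · exact le_self_add
        · exact le_add_self
    _ = p + q := by
        rw [← sq, ← ENNReal.rpow_natCast, ← ENNReal.rpow_mul]
        norm_num

lemma CZO.wt_comp {d : ℕ} (S : CZO d) {a v : ℝ} (ha : 0 < a) (hv : 0 ≤ v) {x ξ y : Rd d}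
    (h0 : 0 < dist ξ y) (hx : 0 < dist x y) (h : dist x y ≤ a * dist ξ y) (hav : a * v < dist x y) :
    S.wt v ξ y ≤ ENNReal.ofReal (a ^ d) * S.wt (a * v) x y := by
  have hle : v / dist ξ y ≤ a * v / dist x y := by
    rw [div_le_div_iff₀ h0 hx]
    nlinarith
  have hlt : a * v / dist x y < 1 := by rwa [div_lt_one hx]
  rw [S.wt_eq (hle.trans_lt hlt), S.wt_eq hlt, ← mul_assoc,
    ← ENNReal.ofReal_mul (p := a ^ d) (by positivity)]
  gcongr
  · rw [inv_le_iff_one_le_mul₀ (by positivity), mul_right_comm, ← div_eq_mul_inv,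
          one_le_div (by positivity), ← mul_pow]
    gcongr
  · exact S.W_mono hle

/-- comparability of the shell weight on a far away cube -/
lemma shell_wt_comp {d : ℕ} {l s t : ℝ} (hl : 0 < l) (hs : 0 < s) (ht : 0 < t) (hst : s ≤ 2 * t)
    (hts : t ≤ 2 * s) :
    ENNReal.ofReal ((s ^ d)⁻¹) * ((ENNReal.ofReal (l / s)) ^ (1 / 2 : ℝ))⁻¹ ≤
      ENNReal.ofReal (2 ^ (d + 1)) *
        (ENNReal.ofReal ((t ^ d)⁻¹) * ((ENNReal.ofReal (l / t)) ^ (1 / 2 : ℝ))⁻¹) := by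
  have e : ∀ s : ℝ, 0 < s → ((ENNReal.ofReal (l / s)) ^ (1 / 2 : ℝ))⁻¹ =
      ENNReal.ofReal (Real.sqrt (s / l)) := by
    intro s hs
    rw [rpow_half_ofReal _ (by positivity), ← ENNReal.ofReal_inv_of_pos (by positivity),
      ← Real.sqrt_inv, inv_div]
  rw [e s hs, e t ht, ← ENNReal.ofReal_mul (by positivity), ← ENNReal.ofReal_mul (by positivity),
    ← ENNReal.ofReal_mul (by positivity)]
  apply ENNReal.ofReal_le_ofReal
  have h1 : (s ^ d)⁻¹ ≤ 2 ^ d * (t ^ d)⁻¹ := by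
    rw [inv_le_iff_one_le_mul₀ (by positivity), mul_right_comm, ← div_eq_mul_inv,
          one_le_div (by positivity), ← mul_pow]
    gcongr
  have h2 : Real.sqrt (s / l) ≤ 2 * Real.sqrt (t / l) := by
    rw [Real.sqrt_le_left (by positivity), mul_pow, Real.sq_sqrt (by positivity), mul_div_assoc']
    gcongr
    linarith
  calc (s ^ d)⁻¹ * Real.sqrt (s / l) ≤ (2 ^ d * (t ^ d)⁻¹) * (2 * Real.sqrt (t / l)) := by gcongr
    _ = _ := by ring

lemma CZO.bad_est {d : ℕ} (hd : 0 < d) (S : CZO d) {ρ : ℝ} (hρ : 2 < ρ) (D a : ℝ)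
    (hD : D = Real.sqrt d) (ha : a = 1 + D) : ∃ C : ℝ≥0∞, C ≠ ∞ ∧
    ∀ (P : Set (Cube d)) (b u : Rd d → ℝ) (κ : ℝ≥0∞), BadData P b u κ →
    ∀ (R : Cube d) (x ξ : Rd d), x ∈ R.set → ξ ∈ R.set →
    (∀ Q ∈ P, ∀ y ∈ Q.set, 8 * D * a * Q.l < dist x y) →
    S.var ρ ((R.dilate 3)ᶜ.indicator b) ξ ≤
      C * (κ + ∫⁻ y, ‖b y‖ₑ * S.wt (a * (D * u y)) x y) := by
  obtain ⟨Cs, hCs, hshell⟩ := shell_lint d hd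
  have hD1 : 1 ≤ D := by
    rw [hD]; exact Real.one_le_sqrt.2 (by exact_mod_cast hd)
  have ha2 : 2 ≤ a := by linarith
  set k1 : ℝ≥0∞ := ENNReal.ofReal S.Cst with hk1
  have hk1t : k1 ≠ ∞ := ENNReal.ofReal_ne_top
  set c1 : ℝ≥0∞ := ENNReal.ofReal ((6 * D) ^ d) * volume (Metric.ball (0 : Rd d) 1) with hc1
  have hc1t : c1 ≠ ∞ := ENNReal.mul_ne_top ENNReal.ofReal_ne_top measure_ball_lt_top.ne
  set c2 : ℝ≥0∞ := ENNReal.ofReal (2 ^ (d + 1)) with hc2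
  have hc2t : c2 ≠ ∞ := ENNReal.ofReal_ne_top
  set c3 : ℝ≥0∞ := ENNReal.ofReal (a ^ d) with hc3
  have hc3t : c3 ≠ ∞ := ENNReal.ofReal_ne_top
  set c4 : ℝ≥0∞ := (ENNReal.ofReal D) ^ (1 / 2 : ℝ) with hc4
  have hc4t : c4 ≠ ∞ := ENNReal.rpow_ne_top_of_nonneg (by norm_num) ENNReal.ofReal_ne_top
  set CF : ℝ≥0∞ := k1 * (c2 * (c2 * (c4 * (Cs + Cs)))) with hCF
  have hCFt : CF ≠ ∞ := by finiteness
  refine ⟨k1 * c1 + k1 * c3 + (CF * (k1 * c3)) ^ (1 / 2 : ℝ), ?_, ?_⟩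
  · have := ENNReal.rpow_ne_top_of_nonneg (y := 1 / 2) (x := CF * (k1 * c3)) (by norm_num) (by finiteness)
    finiteness
  intro P b u κ hB R x ξ hx hξ hfarx
  have hr : 0 < R.l := R.hl
  set r := R.l with hrdef
  have hxξ : dist ξ x ≤ D * r := by rw [hD]; exact R.dist_le hξ hx
  have hm3 := (R.measurableSet_dilate 3).compl
  set h : Rd d → ℝ := (R.dilate 3)ᶜ.indicator b with hh
  have hhi : Integrable h := hB.bi.indicator hm3
  have : Countable P := hB.cnt.to_subtype
  have hbm := hB.bm
  have hum := hB.um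
  have mP : ∀ Q : Cube d, MeasurableSet Q.set := fun Q => Q.measurableSet_set
  -- geometry
  have g0 : ∀ y, y ∉ R.dilate 3 → r ≤ dist ξ y ∧ r ≤ dist x y ∧ dist x y ≤ a * dist ξ y ∧
      dist ξ y ≤ a * dist x y := by
    intro y hy
    have h1 := R.l_le_dist hξ hy
    have h2 := R.l_le_dist hx hy
    have t1 := dist_triangle x ξ y
    have t2 := dist_triangle ξ x y
    rw [dist_comm x ξ] at t1
    refine ⟨h1, h2, ?_, ?_⟩
    · rw [ha]; nlinarith
    · rw [ha]; nlinarith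
  have g1 : ∀ Q ∈ P, ∀ y ∈ Q.set, y ∉ R.dilate 3 → 8 * (D * Q.l) < dist ξ y := by
    intro Q hQ y hy h3
    have h1 := hfarx Q hQ y hy
    obtain ⟨-, -, h2, -⟩ := g0 y h3
    have : a * (8 * (D * Q.l)) < a * dist ξ y := by nlinarith
    exact lt_of_mul_lt_mul_left this (by linarith)
  refine S.var_le (by linarith) hhi ξ _ (fun N e he hpos hlim => ?_)
  set A : ℕ → Set (Rd d) := fun i => ann ξ (e (i + 1)) (e i) with hA
  have mA : ∀ i, MeasurableSet (A i) := fun i => measurableSet_ann _ _ _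
  have hAd := ann_disjoint ξ he.antitone
  have ih : ∀ i, IntegrableOn (fun y => S.K ξ y * h y) (A i) := fun i =>
    (S.integrableOn_K hhi ξ (hpos (i + 1))).mono_set (fun y hy => hy.1)
  set Φ : ℝ≥0∞ := ∫⁻ y, ‖b y‖ₑ * S.wt (a * (D * u y)) x y with hΦ
  -- the pieces
  set P1 : Set (Cube d) := {Q ∈ P | Q.set ⊆ Metric.closedBall ξ (6 * D * r)} with hP1
  have cP1 : P1.Countable := hB.cnt.mono (fun Q hQ => hQ.1)
  have : Countable P1 := cP1.to_subtype
  set Y1 : Set (Rd d) := ⋃ Q : P1, (Q : Cube d).set with hY1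
  have mY1 : MeasurableSet Y1 := MeasurableSet.iUnion fun Q => mP _
  set H1 : Rd d → ℝ≥0∞ := Y1.indicator (fun y => k1 * ENNReal.ofReal ((r ^ d)⁻¹) * ‖b y‖ₑ) with hH1
  have mH1 : Measurable H1 := Measurable.indicator (by fun_prop) mY1
  set H2 : Rd d → ℝ≥0∞ := fun y => k1 * c3 * (‖b y‖ₑ * S.wt (a * (D * u y)) x y) with hH2
  set φ : Rd d → ℝ≥0∞ := fun y => k1 * (‖b y‖ₑ * ENNReal.ofReal ((dist ξ y ^ d)⁻¹)) with hφ
  set w : Rd d → ℝ≥0∞ := fun y => (ENNReal.ofReal (u y / dist ξ y)) ^ (1 / 2 : ℝ) with hw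
  set Zp : ℕ → P → Set (Rd d) := fun i Q => {y | (y ∈ (Q : Cube d).set ∧ y ∈ A i) ∧
    ((∀ z ∈ (Q : Cube d).set, z ∉ R.dilate 3) ∧ ¬ (Q : Cube d).set ⊆ A i)} with hZp
  have mZp : ∀ i Q, MeasurableSet (Zp i Q) := by
    intro i Q
    exact ((mP Q).inter (mA i)).inter (MeasurableSet.const _)
  set Z : ℕ → Set (Rd d) := fun i => ⋃ Q, Zp i Q with hZ
  have mZ : ∀ i, MeasurableSet (Z i) := fun i => MeasurableSet.iUnion (mZp i)
  have hZA : ∀ i, Z i ⊆ A i := by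
    intro i y hy
    obtain ⟨Q, hQ⟩ := mem_iUnion.1 hy
    exact hQ.1.2
  have dP : Pairwise (Function.onFun Disjoint (fun Q : P => (Q : Cube d).set)) := by
    intro Q Q' hne
    exact hB.disj Q.2 Q'.2 (fun h => hne (Subtype.ext h))
  have dZp : ∀ i, Pairwise (Function.onFun Disjoint (Zp i)) := by
    intro i Q Q' hne
    exact (dP hne).mono (fun y hy => hy.1.1) (fun y hy => hy.1.1)
  -- comparison of weights
  have hwt : ∀ Q ∈ P, ∀ y ∈ Q.set, y ∉ R.dilate 3 →
      S.wt (D * Q.l) ξ y ≤ c3 * S.wt (a * (D * u y)) x y := by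
    intro Q hQ y hy h3
    obtain ⟨h1, h2, h4, -⟩ := g0 y h3
    rw [hB.uP Q hQ y hy]
    have hl := Q.hl
    have := hfarx Q hQ y hy
    refine S.wt_comp (by linarith) (by positivity) (by linarith) (by linarith) h4 ?_
    have : 0 < a * (D * Q.l) := by positivity
    nlinarith
  have hpiece : ∀ i, ∀ Q : P, ‖∫ y in (Q : Cube d).set ∩ A i, S.K ξ y * h y‖ₑ ≤
      (∫⁻ y in (Q : Cube d).set ∩ A i, (H1 y + H2 y)) + ∫⁻ y in Zp i Q, φ y := by
    rintro i ⟨Q, hQ⟩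
    simp only
    have hl := Q.hl
    by_cases hII : ∀ z ∈ Q.set, z ∉ R.dilate 3
    · have hhb : ∀ y ∈ Q.set, h y = b y := fun y hy => by
        rw [hh, indicator_of_mem (hII y hy)]
      by_cases hsub : Q.set ⊆ A i
      · refine le_trans ?_ le_self_add
        rw [inter_eq_left.2 hsub]
        set cQ : Rd d := WithLp.toLp 2 Q.c with hcQ
        have hcm : cQ ∈ Q.set := Q.center_mem
        have e1 : ∫ y in Q.set, S.K ξ y * h y = ∫ y in Q.set, (S.K ξ y - S.K ξ cQ) * b y := by
          have i1 : IntegrableOn (fun y => S.K ξ y * b y) Q.set :=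
            ((ih i).mono_set hsub).congr_fun (fun y hy => by simp only [hhb y hy]) (mP Q)
          have e2 : ∫ y in Q.set, S.K ξ y * h y = ∫ y in Q.set, S.K ξ y * b y :=
            setIntegral_congr_fun (mP Q) (fun y hy => by simp only [hhb y hy])
          simp only [sub_mul]
          rw [integral_sub i1 (hB.bi.integrableOn.const_mul _), integral_const_mul, hB.bint Q hQ, e2]
          simp
        rw [e1]
        refine (enorm_integral_le_lintegral_enorm _).trans ?_
        refine setLIntegral_mono' (mP Q) (fun y hy => ?_)
        refine le_trans ?_ le_add_self
        have h8 := g1 Q hQ y hy (hII y hy)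
        have hdc := Q.dist_le hy hcm
        rw [← hD] at hdc
        have hDl : 0 < D * Q.l := by positivity
        rw [enorm_mul, mul_comm]
        simp only [hH2]
        have s1 := (S.enorm_smooth (x := y) (x' := cQ) (y := ξ) (δ := D * Q.l)
          (by rw [dist_comm]; linarith) (by rw [dist_comm y ξ]; linarith) hdc
          (by rw [dist_comm]; linarith)).2
        have s2 : S.wt (D * Q.l) y ξ = S.wt (D * Q.l) ξ y := by
          unfold CZO.wt; rw [dist_comm]
        rw [s2] at s1
        calc _ ≤ ‖b y‖ₑ * (k1 * (c3 * S.wt (a * (D * u y)) x y)) := by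
              gcongr
              exact s1.trans (by gcongr; exact hwt Q hQ y hy (hII y hy))
          _ = _ := by ring
      · refine le_trans ?_ le_add_self
        have e1 : Zp i ⟨Q, hQ⟩ = Q.set ∩ A i := by
          ext y; simp only [hZp]
          exact ⟨fun h => h.1, fun h => ⟨h, hII, hsub⟩⟩
        rw [e1]
        refine (enorm_integral_le_lintegral_enorm _).trans ?_
        refine setLIntegral_mono' ((mP Q).inter (mA i)) (fun y hy => ?_)
        have h8 := g1 Q hQ y hy.1 (hII y hy.1)
        have : 0 < dist ξ y := by
          have : 0 < D * Q.l := by positivity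
          linarith
        rw [enorm_mul, hhb y hy.1]
        simp only [hφ]
        calc _ ≤ (k1 * ENNReal.ofReal ((dist ξ y ^ d)⁻¹)) * ‖b y‖ₑ := by
              gcongr; exact S.enorm_K_le this
          _ = _ := by ring
    · push Not at hII
      obtain ⟨z, hz, hz3⟩ := hII
      refine le_trans ?_ le_self_add
      refine (enorm_integral_le_lintegral_enorm _).trans ?_
      refine setLIntegral_mono' ((mP Q).inter (mA i)) (fun y hy => ?_)
      by_cases h3 : y ∈ R.dilate 3
      · simp [hh, h3]
      have h8 := g1 Q hQ y hy.1 h3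
      have hrd := (g0 y h3).1
      have hmem : y ∈ Y1 := by
        refine mem_iUnion.2 ⟨⟨Q, hQ, fun v hv => ?_⟩, hy.1⟩
        rw [Metric.mem_closedBall, dist_comm]
        have d1 := R.dist_le_three hξ hz3
        have d2 := Q.dist_le hz hy.1
        have d3 := Q.dist_le hz hv
        rw [← hD] at d1 d2 d3
        have t1 := dist_triangle ξ z y
        have t2 := dist_triangle ξ z v
        rw [← hrdef] at d1
        nlinarith
      refine le_trans ?_ le_self_add
      simp only [hH1, hh]
      rw [indicator_of_mem h3, indicator_of_mem hmem, enorm_mul]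
      gcongr
      refine (S.enorm_K_le (by linarith)).trans ?_
      gcongr
  have hterm : ∀ i < N, ‖∫ y in A i, S.K ξ y * h y‖ₑ ≤
      (∫⁻ y in A i, (H1 y + H2 y)) + (∫⁻ y in Z i, φ y) + 0 := by
    intro i _
    have dPA : Pairwise (Function.onFun Disjoint (fun Q : P => (Q : Cube d).set ∩ A i)) := by
      intro Q Q' hne
      exact (dP hne).mono inter_subset_left inter_subset_left
    have mPA : ∀ Q : P, MeasurableSet ((Q : Cube d).set ∩ A i) := fun Q => (mP _).inter (mA i)
    have hsubA : (⋃ Q : P, (Q : Cube d).set ∩ A i) ⊆ A i := iUnion_subset fun Q => inter_subset_right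
    have e1 : ∫ y in A i, S.K ξ y * h y = ∫ y in ⋃ Q : P, (Q : Cube d).set ∩ A i, S.K ξ y * h y := by
      refine setIntegral_eq_of_subset_of_forall_sdiff_eq_zero (mA i) hsubA ?_
      rintro y ⟨hyA, hy⟩
      have : b y = 0 := hB.b0 y (fun Q hQ hyQ => hy (mem_iUnion.2 ⟨⟨Q, hQ⟩, hyQ, hyA⟩))
      simp [hh, indicator, this]
    rw [e1, add_zero]
    refine (enorm_int_iUnion mPA dPA ((ih i).mono_set hsubA)).trans ?_
    refine (ENNReal.tsum_le_tsum (hpiece i)).trans ?_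
    rw [ENNReal.tsum_add, ← lintegral_iUnion mPA dPA, ← lintegral_iUnion (mZp i) (dZp i)]
    gcongr
  -- the shell estimate
  have hZinfo : ∀ i, ∀ y ∈ Z i, ∃ Q ∈ P, y ∈ Q.set ∧ (∀ z ∈ Q.set, z ∉ R.dilate 3) ∧
      8 * (D * Q.l) < dist ξ y ∧ u y = Q.l := by
    intro i y hy
    obtain ⟨⟨Q, hQ⟩, hQ'⟩ := mem_iUnion.1 hy
    exact ⟨Q, hQ, hQ'.1.1, hQ'.2.1, g1 Q hQ y hQ'.1.1 (hQ'.2.1 y hQ'.1.1), hB.uP Q hQ y hQ'.1.1⟩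
  have mφ : Measurable φ := by fun_prop
  have mw : Measurable w := by fun_prop
  have hs := shell_l2 N A Z mZ mA hZA hAd φ w mφ mw ?_ (CF * κ) ?_
  · have hmain := lsum_comb hρ N _ _ _ _ hterm
    refine (show S.fv ρ N e _ ξ ≤ _ from hmain).trans ?_
    have z0 : (∑ i ∈ Finset.range N, (0 : ℝ≥0∞) ^ ρ) ^ (1 / ρ) = 0 := by
      rw [ENNReal.zero_rpow_of_pos (by linarith)]
      simp only [Finset.sum_const_zero]
      rw [ENNReal.zero_rpow_of_pos (by positivity)]
    rw [z0, add_zero]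
    have p1 : ∑ i ∈ Finset.range N, ∫⁻ y in A i, (H1 y + H2 y) ≤ k1 * c1 * κ + k1 * c3 * Φ := by
      refine (sum_lint_le N mA hAd _).trans ?_
      rw [lintegral_add_left mH1]
      gcongr
      · simp only [hH1]
        rw [lintegral_indicator mY1, lintegral_const_mul _ (by fun_prop), hY1,
          lintegral_iUnion (fun Q : P1 => mP Q)]
        · have q1 : ∑' Q : P1, ∫⁻ y in (Q : Cube d).set, ‖b y‖ₑ ≤ κ * volume Y1 := by
            rw [hY1, measure_iUnion _ (fun Q : P1 => mP Q), ← ENNReal.tsum_mul_left]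
            · refine ENNReal.tsum_le_tsum (fun Q => ?_)
              rw [Cube.volume_set]
              exact hB.bK Q Q.2.1
            · intro Q Q' hne
              exact hB.disj Q.2.1 Q'.2.1 (fun h => hne (Subtype.ext h))
          have q2 : volume Y1 ≤ ENNReal.ofReal (r ^ d) * c1 := by
            calc volume Y1 ≤ volume (Metric.closedBall ξ (6 * D * r)) :=
                  measure_mono (iUnion_subset fun Q => Q.2.2)
              _ = _ := by
                  rw [Measure.addHaar_closedBall _ _ (by positivity), hc1, ← mul_assoc,
                    ← ENNReal.ofReal_mul (by positivity), ← mul_pow]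
                  simp only [finrank_euclideanSpace, Fintype.card_fin]
                  congr 3
                  ring
          calc _ ≤ k1 * ENNReal.ofReal ((r ^ d)⁻¹) * (κ * (ENNReal.ofReal (r ^ d) * c1)) := by
                gcongr
                exact q1.trans (by gcongr)
            _ = (k1 * c1 * κ) * (ENNReal.ofReal ((r ^ d)⁻¹) * ENNReal.ofReal (r ^ d)) := by ring
            _ = _ := by
                rw [← ENNReal.ofReal_mul (by positivity), inv_mul_cancel₀ (by positivity)]
                simp
        · intro Q Q' hne
          exact hB.disj Q.2.1 Q'.2.1 (fun h => hne (Subtype.ext h))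
      · simp only [hH2]
        rw [lintegral_const_mul' _ _ (by finiteness)]
    have p2 : ∫⁻ y in ⋃ i, Z i, φ y * w y ≤ k1 * c3 * Φ := by
      rw [hΦ, ← lintegral_const_mul' _ _ (by finiteness)]
      refine (setLIntegral_mono' (MeasurableSet.iUnion mZ) (fun y hy => ?_)).trans
        (setLIntegral_le_lintegral (⋃ i, Z i) _)
      obtain ⟨i, hi⟩ := mem_iUnion.1 hy
      obtain ⟨Q, hQ, hyQ, h3, h8, hu⟩ := hZinfo i y hi
      have hl := Q.hl
      have hDl : 0 < D * Q.l := by positivity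
      have h0 : 0 < dist ξ y := by linarith
      have hk := hwt Q hQ y hyQ (h3 y hyQ)
      rw [S.wt_eq (by rw [div_lt_one h0]; linarith)] at hk
      simp only [hφ, hw]
      rw [rpow_half_ofReal _ (by rw [hu]; positivity), hu]
      rw [hu] at hk
      calc _ = k1 * ‖b y‖ₑ * (ENNReal.ofReal ((dist ξ y ^ d)⁻¹) *
            ENNReal.ofReal (Real.sqrt (Q.l / dist ξ y))) := by ring
        _ ≤ k1 * ‖b y‖ₑ * (c3 * S.wt (a * (D * Q.l)) x y) := by
            refine mul_le_mul' le_rfl (le_trans ?_ hk)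
            gcongr
            refine (Real.sqrt_le_sqrt ?_).trans S.sqrt_le_W
            gcongr
            nlinarith
        _ = _ := by ring
    have p3 : (∑ i ∈ Finset.range N, (∫⁻ y in Z i, φ y) ^ (2 : ℝ)) ^ (1 / 2 : ℝ) ≤
        (CF * (k1 * c3)) ^ (1 / 2 : ℝ) * (κ + Φ) := by
      calc _ ≤ ((CF * κ) * (k1 * c3 * Φ)) ^ (1 / 2 : ℝ) := by
            gcongr
            exact hs.trans (by gcongr)
        _ = ((CF * (k1 * c3)) * (κ * Φ)) ^ (1 / 2 : ℝ) := by congr 1; ring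
        _ = (CF * (k1 * c3)) ^ (1 / 2 : ℝ) * (κ * Φ) ^ (1 / 2 : ℝ) :=
            ENNReal.mul_rpow_of_nonneg _ _ (by norm_num)
        _ ≤ _ := by gcongr; exact sqrt_mul_le_add _ _
    calc _ ≤ (k1 * c1 * κ + k1 * c3 * Φ) + (CF * (k1 * c3)) ^ (1 / 2 : ℝ) * (κ + Φ) := add_le_add p1 p3
      _ ≤ (k1 * c1 * (κ + Φ) + k1 * c3 * (κ + Φ)) + (CF * (k1 * c3)) ^ (1 / 2 : ℝ) * (κ + Φ) := by
          gcongr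
          · exact le_self_add
          · exact le_add_self
      _ = _ := by ring
  · intro i y hy
    obtain ⟨Q, hQ, hyQ, h3, h8, hu⟩ := hZinfo i y hy
    have hl := Q.hl
    have hDl : 0 < D * Q.l := by positivity
    have h0 : 0 < dist ξ y := by linarith
    simp only [hw, hu]
    rw [rpow_half_ofReal _ (by positivity)]
    refine ⟨?_, ENNReal.ofReal_ne_top⟩
    have : 0 < Q.l / dist ξ y := by positivity
    simpa using Real.sqrt_pos.2 this
  · intro i
    set ψ : ℝ → Rd d → ℝ≥0∞ := fun ε => {y : Rd d | ε / dist ξ y ∈ Icc (1/2 : ℝ) 2}.indicator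
      (fun y => ENNReal.ofReal ((dist ξ y ^ d)⁻¹) * (ENNReal.ofReal |1 - ε / dist ξ y|) ^ (-(1/2) : ℝ)) with hψ
    have mS : ∀ ε : ℝ, MeasurableSet {y : Rd d | ε / dist ξ y ∈ Icc (1/2 : ℝ) 2} := by
      intro ε
      have : Measurable (fun y : Rd d => ε / dist ξ y) := by fun_prop
      exact this measurableSet_Icc
    have mψ : ∀ ε, Measurable (ψ ε) := by
      intro ε
      refine Measurable.indicator ?_ (mS ε)
      have : Measurable (fun y : Rd d => |1 - ε / dist ξ y|) :=
        continuous_abs.measurable.comp (by fun_prop)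
      fun_prop
    have hψi : ∀ ε, 0 < ε → ∫⁻ y, ψ ε y ≤ Cs := by
      intro ε hε
      simp only [hψ]
      rw [lintegral_indicator (mS ε)]
      exact hshell ε hε ξ
    have hcube : ∀ Q : P, ∫⁻ y in Zp i Q, φ y * (w y)⁻¹ ≤ k1 * (c2 * (c2 * c4)) * κ *
        ∫⁻ y in (Q : Cube d).set, (ψ (e (i + 1)) y + ψ (e i) y) := by
      rintro ⟨Q, hQ⟩
      simp only
      have hl := Q.hl
      have hDl : 0 < D * Q.l := by positivity
      rcases (Zp i ⟨Q, hQ⟩).eq_empty_or_nonempty with h0 | ⟨y0, hy0⟩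
      · rw [h0]; simp
      obtain ⟨⟨hy0Q, hy0A⟩, hII, hnsub⟩ := hy0
      obtain ⟨y1, hy1Q, hy1A⟩ := not_subset.1 hnsub
      simp only at hy0Q hII hnsub hy1Q
      set k : Rd d → ℝ≥0∞ := fun y => ENNReal.ofReal ((dist ξ y ^ d)⁻¹) *
        ((ENNReal.ofReal (Q.l / dist ξ y)) ^ (1 / 2 : ℝ))⁻¹ with hk
      have h8 : ∀ y ∈ Q.set, 8 * (D * Q.l) < dist ξ y := fun y hy => g1 Q hQ y hy (hII y hy)
      have hclose : ∀ y ∈ Q.set, ∀ z ∈ Q.set, dist ξ y ≤ dist ξ z + D * Q.l := by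
        intro y hy z hz
        have := Q.dist_le hz hy
        rw [← hD] at this
        linarith [dist_triangle ξ z y]
      have hkk : ∀ y ∈ Q.set, ∀ z ∈ Q.set, k y ≤ c2 * k z := by
        intro y hy z hz
        have a1 := h8 y hy
        have a2 := h8 z hz
        have a3 := hclose y hy z hz
        have a4 := hclose z hz y hy
        exact shell_wt_comp hl (by linarith) (by linarith) (by linarith) (by linarith)
      have hkψ : ∀ y ∈ Q.set, k y ≤ c4 * (ψ (e (i + 1)) y + ψ (e i) y) := by
        intro y hy
        have key : ∀ ε, |dist ξ y - ε| ≤ D * Q.l → k y ≤ c4 * ψ ε y := by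
          intro ε hε
          have a1 := h8 y hy
          have h0 : 0 < dist ξ y := by linarith
          obtain ⟨b1, b2⟩ := shell_half (t := dist ξ y) (by linarith) hDl hε
          simp only [hψ, hk]
          rw [indicator_of_mem (by exact b1), mul_left_comm]
          gcongr
          rw [ENNReal.rpow_neg]
          have hc40 : c4 ≠ 0 := by
            rw [hc4, rpow_half_ofReal _ (by linarith)]
            have : 0 < D := by linarith
            simpa using Real.sqrt_pos.2 this
          have hle : ENNReal.ofReal |1 - ε / dist ξ y| ^ (1 / 2 : ℝ) ≤
              c4 * ENNReal.ofReal (Q.l / dist ξ y) ^ (1 / 2 : ℝ) := by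
            rw [hc4, ← ENNReal.mul_rpow_of_nonneg _ _ (by norm_num),
              ← ENNReal.ofReal_mul (by linarith), ← mul_div_assoc]
            gcongr
          calc (ENNReal.ofReal (Q.l / dist ξ y) ^ (1 / 2 : ℝ))⁻¹
              = c4 * (c4 * ENNReal.ofReal (Q.l / dist ξ y) ^ (1 / 2 : ℝ))⁻¹ := by
                rw [ENNReal.mul_inv (Or.inl hc40) (Or.inl hc4t), ← mul_assoc,
                  ENNReal.mul_inv_cancel hc40 hc4t, one_mul]
            _ ≤ _ := by
                gcongr
        by_cases hc : e (i + 1) < dist ξ y1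
        · have hc2 : e i < dist ξ y1 := by
            by_contra hcon
            exact hy1A ⟨hc, not_lt.1 hcon⟩
          refine (key (e i) ?_).trans (by gcongr; exact le_add_self)
          have := hclose y hy y0 hy0Q
          have := hclose y1 hy1Q y hy
          have := hy0A.2
          rw [abs_le]; constructor <;> linarith
        · refine (key (e (i + 1)) ?_).trans (by gcongr; exact le_self_add)
          have := hclose y hy y1 hy1Q
          have := hclose y0 hy0Q y hy
          have := hy0A.1
          rw [abs_le]; constructor <;> linarith
      calc ∫⁻ y in Zp i ⟨Q, hQ⟩, φ y * (w y)⁻¹ ≤ ∫⁻ y in Q.set, φ y * (w y)⁻¹ :=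
            lintegral_mono_set (fun y hy => hy.1.1)
        _ ≤ ∫⁻ y in Q.set, (k1 * (c2 * k y0)) * ‖b y‖ₑ := by
            refine setLIntegral_mono' (mP Q) (fun y hy => ?_)
            have e1 : φ y * (w y)⁻¹ = k1 * k y * ‖b y‖ₑ := by
              simp only [hφ, hw, hk, hB.uP Q hQ y hy]; ring
            rw [e1]
            gcongr
            exact hkk y hy y0 hy0Q
        _ = (k1 * (c2 * k y0)) * ∫⁻ y in Q.set, ‖b y‖ₑ := lintegral_const_mul _ (by fun_prop)
        _ ≤ (k1 * (c2 * k y0)) * (κ * Q.vol) := by gcongr; exact hB.bK Q hQ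
        _ = k1 * c2 * κ * (k y0 * volume Q.set) := by rw [Cube.volume_set]; ring
        _ = k1 * c2 * κ * ∫⁻ y in Q.set, k y0 := by rw [setLIntegral_const]
        _ ≤ k1 * c2 * κ * ∫⁻ y in Q.set, (c2 * c4) * (ψ (e (i + 1)) y + ψ (e i) y) := by
            refine mul_le_mul' le_rfl (setLIntegral_mono' (mP Q) (fun y hy => ?_))
            refine (hkk y0 hy0Q y hy).trans ?_
            rw [mul_assoc]
            gcongr
            exact hkψ y hy
        _ = _ := by
            rw [lintegral_const_mul (f := fun y => ψ (e (i + 1)) y + ψ (e i) y) _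
              ((mψ _).add (mψ _))]
            ring
    calc ∫⁻ y in Z i, φ y * (w y)⁻¹ = ∑' Q, ∫⁻ y in Zp i Q, φ y * (w y)⁻¹ :=
          lintegral_iUnion (mZp i) (dZp i) _
      _ ≤ ∑' Q : P, k1 * (c2 * (c2 * c4)) * κ *
          ∫⁻ y in (Q : Cube d).set, (ψ (e (i + 1)) y + ψ (e i) y) := ENNReal.tsum_le_tsum hcube
      _ = k1 * (c2 * (c2 * c4)) * κ *
          ∫⁻ y in ⋃ Q : P, (Q : Cube d).set, (ψ (e (i + 1)) y + ψ (e i) y) := by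
          rw [ENNReal.tsum_mul_left, lintegral_iUnion (fun Q : P => mP Q) dP]
      _ ≤ k1 * (c2 * (c2 * c4)) * κ * (Cs + Cs) := by
          gcongr
          refine (setLIntegral_le_lintegral _ _).trans ?_
          rw [lintegral_add_left (mψ _)]
          exact add_le_add (hψi _ (hpos _)) (hψi _ (hpos _))
      _ = CF * κ := by rw [hCF]; ring

/-! ### Dyadic helpers -/

lemma exists_dyadic_small {d : ℕ} (Q₀ : Cube d) {x : Rd d} (hx : x ∈ Q₀.set) {η : ℝ} (hη : 0 < η) :
    ∃ R, IsDyadicSubcube Q₀ R ∧ x ∈ R.set ∧ R.l < η := by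
  obtain ⟨k, hk⟩ := exists_pow_lt_of_lt_one (div_pos hη Q₀.hl) (by norm_num : (1 / 2 : ℝ) < 1)
  obtain ⟨R, h1, h2, h3⟩ := exists_dyc Q₀ k hx
  refine ⟨R, h1, h2, ?_⟩
  rw [h3]
  rw [lt_div_iff₀ Q₀.hl] at hk
  calc Q₀.l / 2 ^ k = (1 / 2) ^ k * Q₀.l := by rw [one_div, inv_pow]; ring
    _ < η := hk

lemma exists_dyadic_open {d : ℕ} (Q₀ : Cube d) {x : Rd d} (hx : x ∈ Q₀.set) {U : Set (Rd d)}
    (hU : IsOpen U) (hxU : x ∈ U) :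
    ∃ R, IsDyadicSubcube Q₀ R ∧ x ∈ R.set ∧ R.set ⊆ U := by
  obtain ⟨r, hr, hb⟩ := Metric.isOpen_iff.1 hU x hxU
  have hD : 0 < √(d : ℝ) + 1 := by positivity
  obtain ⟨R, h1, h2, h3⟩ := exists_dyadic_small Q₀ hx (div_pos hr hD)
  refine ⟨R, h1, h2, fun y hy => hb ?_⟩
  rw [Metric.mem_ball]
  have h4 := R.dist_le hy h2
  rw [lt_div_iff₀ hD] at h3
  have := R.hl
  nlinarith

lemma exists_piecewise {d : ℕ} (P : Set (Cube d)) (hc : P.Countable) (hdj : P.PairwiseDisjoint Cube.set)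
    (v : Cube d → ℝ) : ∃ m : Rd d → ℝ, Measurable m ∧ (∀ Q ∈ P, ∀ y ∈ Q.set, m y = v Q) ∧
      ∀ y, (∀ Q ∈ P, y ∉ Q.set) → m y = 0 := by
  haveI := hc.to_subtype
  obtain ⟨m, hm, h⟩ := exists_measurable_piecewise (ι := Option P)
    (fun o => match o with
      | none => (⋃ Q : P, (Q : Cube d).set)ᶜ
      | some Q => (Q : Cube d).set)
    (by
      rintro (_ | Q)
      · exact (MeasurableSet.iUnion fun Q => Cube.measurableSet_set _).compl
      · exact Cube.measurableSet_set _)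
    (fun o _ => match o with
      | none => (0 : ℝ)
      | some Q => v Q)
    (fun o => measurable_const)
    (by
      rintro (_ | Q) (_ | R) hne y hy
      · rfl
      · exact absurd (mem_iUnion.2 ⟨R, hy.2⟩) hy.1
      · exact absurd (mem_iUnion.2 ⟨Q, hy.1⟩) hy.2
      · have hQR : (Q : Cube d) ≠ R := fun h => hne (by rw [Subtype.ext h])
        exact absurd hy.2 (Set.disjoint_left.1 (hdj Q.2 R.2 hQR) hy.1))
  refine ⟨m, hm, fun Q hQ y hy => h (some ⟨Q, hQ⟩) hy, fun y hy => h none ?_⟩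
  simp only [mem_compl_iff, mem_iUnion, not_exists]
  exact fun Q => hy Q Q.2

lemma volume_zero_of_good {d : ℕ} (hd : 0 < d) (Q₀ : Cube d) (φ : Rd d → ℝ≥0∞) (hφ : Measurable φ)
    (κ : ℝ≥0∞) (hκ : κ ≠ 0) (hκ' : κ ≠ ∞) (B : Set (Rd d)) (hB : MeasurableSet B) (hBQ : B ⊆ Q₀.set)
    (hg : ∀ R, IsDyadicSubcube Q₀ R → (R.set ∩ B).Nonempty → ∫⁻ y in R.set, φ y ≤ κ * R.vol)
    (hlt : ∀ y ∈ B, κ < φ y) : volume B = 0 := by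
  by_contra h0
  have hBf : volume B ≠ ∞ :=
    ((measure_mono hBQ).trans_lt (by rw [Q₀.volume_set]; exact Q₀.vol_ne_top.lt_top)).ne
  have h1 : ∫⁻ y in B, κ < ∫⁻ y in B, φ y :=
    setLIntegral_strict_mono hB h0 hφ (by simp [ENNReal.mul_ne_top hκ' hBf])
      (Eventually.of_forall hlt)
  rw [setLIntegral_const] at h1
  have h2 : volume B < (∫⁻ y in B, φ y) / κ := by
    rwa [ENNReal.lt_div_iff_mul_lt (Or.inl hκ) (Or.inl hκ'), mul_comm]
  obtain ⟨U, hBU, hU, hUlt⟩ := B.exists_isOpen_lt_of_lt _ h2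
  rw [ENNReal.lt_div_iff_mul_lt (Or.inl hκ) (Or.inl hκ')] at hUlt
  refine absurd hUlt (not_lt.2 ?_)
  set V : Set (Cube d) := {R ∈ maxBad Q₀ (fun R => R.set ⊆ U) | (R.set ∩ B).Nonempty} with hV
  have hVc : V.Countable := (maxBad_countable Q₀ _).mono (fun _ h => h.1)
  haveI := hVc.to_subtype
  have hcov : B ⊆ ⋃ R : V, (R : Cube d).set := by
    intro y hy
    obtain ⟨R, r1, r2, r3⟩ := exists_dyadic_open Q₀ (hBQ hy) hU (hBU hy)
    obtain ⟨P, p1, p2⟩ := maxBad_cover hd Q₀ (fun R => R.set ⊆ U) r1 r3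
    exact mem_iUnion.2 ⟨⟨P, p1, y, p2 r2, hy⟩, p2 r2⟩
  calc ∫⁻ y in B, φ y ≤ ∫⁻ y in ⋃ R : V, (R : Cube d).set, φ y := lintegral_mono_set hcov
    _ ≤ ∑' R : V, ∫⁻ y in (R : Cube d).set, φ y := lintegral_iUnion_le _ _
    _ ≤ ∑' R : V, κ * volume (R : Cube d).set :=
        ENNReal.tsum_le_tsum fun R => by
          rw [Cube.volume_set]; exact hg R R.2.1.1 R.2.2
    _ = κ * volume (⋃ R : V, (R : Cube d).set) := by
        rw [ENNReal.tsum_mul_left, measure_iUnion _ (fun R => Cube.measurableSet_set _)]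
        intro R R' hne
        exact maxBad_disjoint Q₀ _ R.2.1 R'.2.1 (fun h => hne (Subtype.ext h))
    _ ≤ κ * volume U := by
        gcongr
        exact iUnion_subset fun R => R.2.1.2.1
    _ = volume U * κ := mul_comm _ _

lemma tsum_setLIntegral_le {d : ℕ} (P : Set (Cube d)) (hc : P.Countable)
    (hdj : P.PairwiseDisjoint Cube.set) (φ : Rd d → ℝ≥0∞) :
    ∑' Q : P, ∫⁻ y in (Q : Cube d).set, φ y ≤ ∫⁻ y, φ y := by
  haveI := hc.to_subtype
  rw [← lintegral_iUnion (fun Q => Cube.measurableSet_set _)]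
  · exact setLIntegral_le_lintegral _ _
  · intro R R' hne
    exact hdj R.2 R'.2 (fun h => hne (Subtype.ext h))

lemma cz_decomp {d : ℕ} (hd : 0 < d) (Q₀ : Cube d) (f : Rd d → ℝ) (hf : Measurable f)
    (hfi : Integrable f) (hf0 : ∀ x, x ∉ Q₀.set → f x = 0) (κ : ℝ) (hκ : 0 < κ)
    (hav : ∫⁻ y, ‖f y‖ₑ ≤ ENNReal.ofReal κ * Q₀.vol) :
    ∃ (P : Set (Cube d)) (b u g : Rd d → ℝ), BadData P b u (2 * (ENNReal.ofReal κ * 2 ^ d)) ∧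
      (∀ Q ∈ P, IsDyadicSubcube Q₀ Q) ∧
      ENNReal.ofReal κ * ∑' Q : P, (Q : Cube d).vol ≤ ∫⁻ y, ‖f y‖ₑ ∧
      (∀ y, f y = g y + b y) ∧ Measurable g ∧ Integrable g ∧ (∀ᵐ y, |g y| ≤ 2 ^ d * κ) ∧
      (∀ y, y ∉ Q₀.set → g y = 0) ∧ ∫⁻ y, ‖b y‖ₑ ≤ 2 * ∫⁻ y, ‖f y‖ₑ := by
  set κ' := ENNReal.ofReal κ with hκ'
  have hκ0 : κ' ≠ 0 := by simp [hκ', hκ]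
  have hκt : κ' ≠ ∞ := ENNReal.ofReal_ne_top
  set bad : Cube d → Prop := fun Q => κ' * Q.vol < ∫⁻ y in Q.set, ‖f y‖ₑ with hbad
  have h0 : ¬ bad Q₀ := not_lt.2 ((setLIntegral_le_lintegral _ _).trans hav)
  set P := maxBad Q₀ bad with hP
  have hPc : P.Countable := maxBad_countable _ _
  have hPd : P.PairwiseDisjoint Cube.set := maxBad_disjoint _ _
  have hPdj : Pairwise (Function.onFun Disjoint fun Q : P => (Q : Cube d).set) := by
    intro R R' hne
    exact hPd R.2 R'.2 (fun h => hne (Subtype.ext h))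
  have := hPc.to_subtype
  set v : Cube d → ℝ := fun Q => (∫ y in Q.set, f y) / Q.l ^ d with hv
  obtain ⟨m, hm, hmQ, hm0⟩ := exists_piecewise P hPc hPd v
  obtain ⟨u, hu, huQ, hu0⟩ := exists_piecewise P hPc hPd (fun Q => Q.l)
  set E : Set (Rd d) := ⋃ Q : P, (Q : Cube d).set with hE
  have hEm : MeasurableSet E := MeasurableSet.iUnion fun Q => Cube.measurableSet_set _
  have hmemE : ∀ Q ∈ P, ∀ y ∈ Q.set, y ∈ E := fun Q hQ y hy => mem_iUnion.2 ⟨⟨Q, hQ⟩, hy⟩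
  set b : Rd d → ℝ := E.indicator (fun y => f y - m y) with hb
  have hbm : Measurable b := (hf.sub hm).indicator hEm
  have hpar : ∀ Q ∈ P, ∫⁻ y in Q.set, ‖f y‖ₑ ≤ κ' * 2 ^ d * Q.vol := by
    intro Q hQ
    obtain ⟨P', p1, p2, p3, p4⟩ := maxBad_parent Q₀ bad h0 hQ
    calc ∫⁻ y in Q.set, ‖f y‖ₑ ≤ ∫⁻ y in P'.set, ‖f y‖ₑ := lintegral_mono_set p3
      _ ≤ κ' * P'.vol := not_lt.1 p2
      _ = _ := by rw [p4, mul_assoc]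
  have hvv : ∀ Q : Cube d, ‖v Q‖ₑ * Q.vol ≤ ∫⁻ y in Q.set, ‖f y‖ₑ := by
    intro Q
    have hl : 0 < Q.l ^ d := pow_pos Q.hl d
    have : ‖v Q‖ₑ * Q.vol = ‖∫ y in Q.set, f y‖ₑ := by
      have h1 : Q.vol = ‖Q.l ^ d‖ₑ := by
        rw [Real.enorm_eq_ofReal_abs, abs_of_pos hl]; rfl
      rw [h1, ← enorm_mul, hv]
      simp only
      rw [div_mul_cancel₀ _ hl.ne']
    rw [this]
    exact enorm_integral_le_lintegral_enorm _
  have hbQ : ∀ Q ∈ P, ∀ y ∈ Q.set, b y = f y - v Q := by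
    intro Q hQ y hy
    rw [hb, indicator_of_mem (hmemE Q hQ y hy), hmQ Q hQ y hy]
  have hbl : ∀ Q ∈ P, ∫⁻ y in Q.set, ‖b y‖ₑ ≤ 2 * ∫⁻ y in Q.set, ‖f y‖ₑ := by
    intro Q hQ
    calc ∫⁻ y in Q.set, ‖b y‖ₑ ≤ ∫⁻ y in Q.set, (‖f y‖ₑ + ‖v Q‖ₑ) := by
          refine setLIntegral_mono (by fun_prop) (fun y hy => ?_)
          rw [hbQ Q hQ y hy]
          exact enorm_sub_le
      _ = (∫⁻ y in Q.set, ‖f y‖ₑ) + ‖v Q‖ₑ * Q.vol := by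
          rw [lintegral_add_right _ measurable_const, setLIntegral_const, Q.volume_set]
      _ ≤ _ := by rw [two_mul]; gcongr; exact hvv Q
  have hbt : ∫⁻ y, ‖b y‖ₑ ≤ 2 * ∫⁻ y, ‖f y‖ₑ := by
    have e1 : ∫⁻ y, ‖b y‖ₑ = ∫⁻ y in E, ‖b y‖ₑ := by
      rw [← lintegral_indicator hEm]
      refine lintegral_congr fun y => ?_
      by_cases hy : y ∈ E
      · rw [indicator_of_mem hy]
      · rw [indicator_of_notMem hy, hb, indicator_of_notMem hy, enorm_zero]
    rw [e1, lintegral_iUnion (fun Q => Cube.measurableSet_set _) hPdj]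
    calc _ ≤ ∑' Q : P, 2 * ∫⁻ y in (Q : Cube d).set, ‖f y‖ₑ :=
          ENNReal.tsum_le_tsum fun Q => hbl Q Q.2
      _ ≤ _ := by
          rw [ENNReal.tsum_mul_left]
          gcongr
          exact tsum_setLIntegral_le P hPc hPd _
  have hbi : Integrable b := ⟨hbm.aestronglyMeasurable,
    hbt.trans_lt (ENNReal.mul_lt_top (by norm_num) hfi.2)⟩
  have hnE : ∀ y, (∀ Q ∈ P, y ∉ Q.set) → y ∉ E := by
    intro y hy h
    obtain ⟨Q, hQ⟩ := mem_iUnion.1 h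
    exact hy Q Q.2 hQ
  have hB := volume_zero_of_good hd Q₀ (fun y => ‖f y‖ₑ) (by fun_prop) κ' hκ0 hκt
    ((Q₀.set \ E) ∩ {y | κ' < ‖f y‖ₑ})
    ((Q₀.measurableSet_set.diff hEm).inter (measurableSet_lt measurable_const (by fun_prop)))
    (fun y hy => hy.1.1)
    (by
      rintro R hR ⟨y, hy, hyB⟩
      by_contra hcon
      obtain ⟨Q, q1, q2⟩ := maxBad_cover hd Q₀ bad hR (not_le.1 hcon)
      exact hyB.1.2 (hmemE Q q1 y (q2 hy)))
    (fun y hy => hy.2)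
  refine ⟨P, b, u, fun y => f y - b y, ⟨hPc, hPd, hbm, hbi, ?_, ?_, ?_, hu, huQ⟩, fun Q hQ => hQ.1,
    ?_, fun y => by ring, hf.sub hbm, hfi.sub hbi, ?_, ?_, hbt⟩
  · intro y hy
    rw [hb, indicator_of_notMem (hnE y hy)]
  · intro Q hQ
    rw [setIntegral_congr_fun Q.measurableSet_set (hbQ Q hQ),
      integral_sub hfi.integrableOn (integrableOn_const (by rw [Q.volume_set]; exact Q.vol_ne_top)),
      setIntegral_const, measureReal_def, Q.volume_set]
    unfold Cube.vol
    rw [ENNReal.toReal_ofReal (pow_pos Q.hl d).le, smul_eq_mul, hv]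
    simp only
    rw [mul_div_cancel₀ _ (pow_pos Q.hl d).ne', sub_self]
  · intro Q hQ
    refine (hbl Q hQ).trans ?_
    rw [mul_assoc]
    gcongr
    exact hpar Q hQ
  · rw [← ENNReal.tsum_mul_left]
    exact (ENNReal.tsum_le_tsum fun Q : P => Q.2.2.1.le).trans (tsum_setLIntegral_le P hPc hPd _)
  · have h2 : (1 : ℝ) ≤ 2 ^ d := one_le_pow₀ (by norm_num)
    filter_upwards [measure_eq_zero_iff_ae_notMem.1 hB] with y hy
    by_cases hyE : y ∈ E
    · obtain ⟨Q, hQ⟩ := mem_iUnion.1 hyE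
      rw [hbQ Q Q.2 y hQ, sub_sub_cancel]
      have h3 := (hvv Q).trans (hpar Q Q.2)
      rw [ENNReal.mul_le_mul_iff_left (Cube.vol_pos _).ne' (Cube.vol_ne_top _)] at h3
      have h4 : κ' * 2 ^ d = ENNReal.ofReal (2 ^ d * κ) := by
        rw [ENNReal.ofReal_mul (by positivity), ENNReal.ofReal_pow (by norm_num), mul_comm]
        norm_num [hκ']
      rw [h4, Real.enorm_eq_ofReal_abs, ENNReal.ofReal_le_ofReal_iff (by positivity)] at h3
      exact h3
    · rw [hb, indicator_of_notMem hyE, sub_zero]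
      by_cases hyQ : y ∈ Q₀.set
      · have h3 : ¬ κ' < ‖f y‖ₑ := fun h => hy ⟨⟨hyQ, hyE⟩, h⟩
        rw [not_lt, hκ', Real.enorm_eq_ofReal_abs, ENNReal.ofReal_le_ofReal_iff hκ.le] at h3
        nlinarith
      · rw [hf0 y hyQ, abs_zero]; positivity
  · intro y hy
    have : y ∉ E := hnE y (fun Q hQ h => hy (hQ.1.subset h))
    simp only
    rw [hb, indicator_of_notMem this, hf0 y hy, sub_zero]

lemma CZO.Phi_lint {d : ℕ} (S : CZO d) {Cw : ℝ≥0∞}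
    (hCw : ∀ a : ℝ, 0 < a → ∀ ξ : Rd d, ∫⁻ y, S.wt a ξ y ≤ Cw) {P : Set (Cube d)} {b u : Rd d → ℝ}
    {κ : ℝ≥0∞} (hB : BadData P b u κ) {c : ℝ} (hc : 0 < c) :
    Measurable (fun x => ∫⁻ y, ‖b y‖ₑ * S.wt (c * u y) x y) ∧
    ∫⁻ x, ∫⁻ y, ‖b y‖ₑ * S.wt (c * u y) x y ≤ Cw * ∫⁻ y, ‖b y‖ₑ := by
  have hbm := hB.bm
  have hum := hB.um
  have hmeas : Measurable (Function.uncurry fun x y : Rd d => ‖b y‖ₑ * S.wt (c * u y) x y) := by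
    unfold CZO.wt Function.uncurry
    have := Measurable.indicator S.W_mono.measurable.ennreal_ofReal (measurableSet_Iio (a := (1 : ℝ)))
    refine Measurable.mul (by fun_prop) (Measurable.mul (by fun_prop) (this.comp ?_))
    fun_prop
  refine ⟨hmeas.lintegral_prod_right', ?_⟩
  rw [lintegral_lintegral_swap hmeas.aemeasurable, ← lintegral_const_mul _ (by fun_prop)]
  refine lintegral_mono fun y => ?_
  have hm2 : Measurable (fun x => S.wt (c * u y) x y) := by
    unfold CZO.wt
    have := Measurable.indicator S.W_mono.measurable.ennreal_ofReal (measurableSet_Iio (a := (1 : ℝ)))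
    refine (Measurable.mul (by fun_prop) (this.comp ?_))
    fun_prop
  simp only
  rw [lintegral_const_mul _ hm2, mul_comm]
  by_cases hy : ∀ Q ∈ P, y ∉ Q.set
  · rw [hB.b0 y hy]; simp
  push Not at hy
  obtain ⟨Q, hQ, hyQ⟩ := hy
  have hpos : 0 < c * u y := by rw [hB.uP Q hQ y hyQ]; exact mul_pos hc Q.hl
  gcongr
  refine le_trans (le_of_eq ?_) (hCw _ hpos y)
  refine lintegral_congr fun x => ?_
  unfold CZO.wt
  rw [dist_comm]

lemma CZO.Vr_cheb {d : ℕ} (S : CZO d) {ρ q : ℝ} (hρ : 2 < ρ) (hq : 1 < q) {Aq : ℝ} (hA : 0 < Aq)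
    (hbd : ∀ f : Rd d → ℝ, Measurable f →
      ∫⁻ x, S.var ρ f x ^ q ∂volume ≤ ENNReal.ofReal Aq * ∫⁻ x, ENNReal.ofReal |f x| ^ q ∂volume)
    {δ : ℝ} (hδ : 0 < δ) (Q₀ : Cube d) {g : Rd d → ℝ} (hg : Measurable g) (hgi : Integrable g)
    {M : ℝ} (hM : 0 < M) (hgM : ∀ᵐ y, |g y| ≤ M) (hg0 : ∀ y, y ∉ Q₀.set → g y = 0) :
    volume {x | ENNReal.ofReal ((Aq / δ) ^ (1 / q) * M) < S.Vr ρ g x} ≤ ENNReal.ofReal δ * Q₀.vol := by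
  have hq0 : 0 < q := by linarith
  have hs : 0 < (Aq / δ) ^ (1 / q) := Real.rpow_pos_of_pos (div_pos hA hδ) _
  set t := ENNReal.ofReal ((Aq / δ) ^ (1 / q) * M) with ht
  have h1 : t ^ q * volume {x | t < S.Vr ρ g x} ≤
      ENNReal.ofReal Aq * (ENNReal.ofReal M ^ q * Q₀.vol) := by
    calc t ^ q * volume {x | t < S.Vr ρ g x} ≤ t ^ q * volume {x | t ^ q ≤ S.Vr ρ g x ^ q} := by
          gcongr
          intro hx
          exact ENNReal.rpow_le_rpow (le_of_lt ‹_›) hq0.le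
      _ ≤ ∫⁻ x, S.Vr ρ g x ^ q :=
          mul_meas_ge_le_lintegral ((S.measurable_Vr hg).pow_const q) _
      _ ≤ ∫⁻ x, S.var ρ g x ^ q := lintegral_mono fun x =>
          ENNReal.rpow_le_rpow (S.Vr_le_var (by linarith) hgi x) hq0.le
      _ ≤ _ := hbd g hg
      _ ≤ _ := by
          gcongr
          rw [← Q₀.volume_set, ← setLIntegral_const, ← lintegral_indicator Q₀.measurableSet_set]
          refine lintegral_mono_ae ?_
          filter_upwards [hgM] with y hy
          by_cases hyQ : y ∈ Q₀.set
          · rw [indicator_of_mem hyQ]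
            gcongr
          · rw [hg0 y hyQ]; simp [hq0]
  have h2 : t ^ q = ENNReal.ofReal (Aq / δ) * ENNReal.ofReal M ^ q := by
    rw [ht, ENNReal.ofReal_mul hs.le, ENNReal.mul_rpow_of_nonneg _ _ hq0.le,
      ENNReal.ofReal_rpow_of_pos hs, ← Real.rpow_mul (div_pos hA hδ).le, one_div_mul_cancel hq0.ne',
      Real.rpow_one]
  have h3 : ENNReal.ofReal Aq = ENNReal.ofReal (Aq / δ) * ENNReal.ofReal δ := by
    rw [← ENNReal.ofReal_mul (div_pos hA hδ).le, div_mul_cancel₀ _ hδ.ne']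
  have h4 : t ^ q ≠ 0 := by
    rw [h2]
    refine mul_ne_zero (by simp [div_pos hA hδ]) ?_
    simp [hM, hq0]
  have h5 : t ^ q ≠ ∞ := ENNReal.rpow_ne_top_of_nonneg hq0.le ENNReal.ofReal_ne_top
  rw [← ENNReal.mul_le_mul_iff_right h4 h5]
  refine h1.trans (le_of_eq ?_)
  rw [h2, h3]
  ring

lemma CZO.exists_exc {d : ℕ} (hd : 0 < d) (S : CZO d) {ρ q : ℝ} (hρ : 2 < ρ) (hq : 1 < q)
    (hbdd : S.VarBdd ρ q) {δ : ℝ} (hδ : 0 < δ) : ∃ C : ℝ≥0∞, C ≠ ∞ ∧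
    ∀ (Q₀ : Cube d) (f : Rd d → ℝ), Measurable f → Integrable f → (∀ x, x ∉ Q₀.set → f x = 0) →
    ∀ lam : ℝ, 0 < lam → ∫⁻ y, ‖f y‖ₑ ≤ ENNReal.ofReal lam * Q₀.vol →
    ∃ U : Set (Rd d), IsOpen U ∧ volume U ≤ ENNReal.ofReal δ * Q₀.vol ∧
    ∀ (R : Cube d) (x ξ : Rd d), x ∈ R.set → ξ ∈ R.set → x ∉ U →
      S.var ρ ((R.dilate 3)ᶜ.indicator f) ξ ≤ C * ENNReal.ofReal lam := by
  obtain ⟨Aq, hAq, hbd⟩ := hbdd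
  obtain ⟨Cw, hCwt, hCw⟩ := S.dini_lint hd
  obtain ⟨Cg, hCgt, hgood⟩ := S.good_est hd hρ
  set D : ℝ := Real.sqrt d with hD
  set a : ℝ := 1 + D with ha
  have hD0 : 0 < D := Real.sqrt_pos.2 (by exact_mod_cast hd)
  have ha0 : 0 < a := by positivity
  obtain ⟨Cb, hCbt, hbadest⟩ := S.bad_est hd hρ D a hD ha
  set L : ℝ := 8 * D * a with hL
  have hL0 : 0 < L := by positivity
  set c1 : ℝ := (2 * L + 2) ^ d with hc1
  have hc10 : 0 < c1 := by positivity
  have hδ4 : 0 < δ / 4 := by positivity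
  set A : ℝ := 1 + 4 * c1 / δ + 8 * Cw.toReal / δ with hA
  have hw0 : 0 ≤ Cw.toReal := ENNReal.toReal_nonneg
  have hA1 : 1 ≤ A := by
    have h1 : 0 ≤ 4 * c1 / δ := by positivity
    have h2 : 0 ≤ 8 * Cw.toReal / δ := by positivity
    linarith
  have hA0 : 0 < A := by linarith
  have hAc : c1 ≤ δ / 4 * A := by
    have h2 : 0 ≤ 8 * Cw.toReal / δ := by positivity
    calc c1 = δ / 4 * (4 * c1 / δ) := by field_simp
      _ ≤ δ / 4 * A := by gcongr; linarith
  have hAw : 2 * Cw.toReal ≤ δ / 4 * A := by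
    have h2 : 0 ≤ 4 * c1 / δ := by positivity
    calc 2 * Cw.toReal = δ / 4 * (8 * Cw.toReal / δ) := by field_simp; ring
      _ ≤ δ / 4 * A := by gcongr; linarith
  set B : ℝ := (Aq / (δ / 4)) ^ (1 / q) with hB
  refine ⟨(ENNReal.ofReal (B * 2 ^ d) + Cg * ENNReal.ofReal (2 ^ d) + Cb * (2 * 2 ^ d + 1)) *
    ENNReal.ofReal A, ?_, ?_⟩
  · have : (2 * 2 ^ d + 1 : ℝ≥0∞) ≠ ∞ := by
      refine ENNReal.add_ne_top.2 ⟨ENNReal.mul_ne_top (by norm_num) (by simp), by norm_num⟩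
    refine ENNReal.mul_ne_top (ENNReal.add_ne_top.2 ⟨ENNReal.add_ne_top.2
      ⟨ENNReal.ofReal_ne_top, ENNReal.mul_ne_top hCgt ENNReal.ofReal_ne_top⟩,
      ENNReal.mul_ne_top hCbt this⟩) ENNReal.ofReal_ne_top
  intro Q₀ f hf hfi hf0 lam hlam hav
  set κ : ℝ := A * lam with hκ
  have hκ0 : 0 < κ := by positivity
  have hκm : ENNReal.ofReal κ = ENNReal.ofReal A * ENNReal.ofReal lam := ENNReal.ofReal_mul hA0.le
  have hlk : ENNReal.ofReal lam ≤ ENNReal.ofReal κ :=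
    ENNReal.ofReal_le_ofReal (by rw [hκ]; nlinarith)
  have hk0 : ENNReal.ofReal κ ≠ 0 := by simp [hκ0]
  have hkt : ENNReal.ofReal κ ≠ ∞ := ENNReal.ofReal_ne_top
  obtain ⟨P, b, u, g, hBD, hPdy, hPs, hfgb, hgm, hgi, hgM, hg0, hbL⟩ :=
    cz_decomp hd Q₀ f hf hfi hf0 κ hκ0 (hav.trans (by gcongr))
  have hcnt := hBD.cnt.to_subtype
  set Φ : Rd d → ℝ≥0∞ := fun x => ∫⁻ y, ‖b y‖ₑ * S.wt ((a * D) * u y) x y with hΦ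
  obtain ⟨hΦm, hΦi⟩ := S.Phi_lint hCw hBD (mul_pos ha0 hD0)
  set E1 : Set (Rd d) := ⋃ Q : P, (Q : Cube d).dilate (2 * L + 2) with hE1
  set E2 : Set (Rd d) := {x | ENNReal.ofReal (B * (2 ^ d * κ)) < S.Vr ρ g x} with hE2
  set E3 : Set (Rd d) := {x | ENNReal.ofReal κ < Φ x} with hE3
  have v2 : volume E2 ≤ ENNReal.ofReal (δ / 4) * Q₀.vol :=
    S.Vr_cheb hρ hq hAq hbd hδ4 Q₀ hgm hgi (by positivity) hgM hg0
  have v1 : volume E1 ≤ ENNReal.ofReal (δ / 4) * Q₀.vol := by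
    rw [← ENNReal.mul_le_mul_iff_right hk0 hkt]
    calc ENNReal.ofReal κ * volume E1
        ≤ ENNReal.ofReal κ * ∑' Q : P, ENNReal.ofReal c1 * (Q : Cube d).vol := by
          gcongr
          refine (measure_iUnion_le _).trans (le_of_eq ?_)
          congr 1
          ext Q
          rw [Cube.volume_dilate _ _ (by positivity)]
      _ = ENNReal.ofReal c1 * (ENNReal.ofReal κ * ∑' Q : P, (Q : Cube d).vol) := by
          rw [ENNReal.tsum_mul_left]; ring
      _ ≤ ENNReal.ofReal (δ / 4 * A) * (ENNReal.ofReal lam * Q₀.vol) := by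
          exact mul_le_mul' (ENNReal.ofReal_le_ofReal hAc) (hPs.trans hav)
      _ = _ := by
          rw [ENNReal.ofReal_mul hδ4.le, hκm]; ring
  have v3 : volume E3 ≤ ENNReal.ofReal (δ / 4) * Q₀.vol := by
    rw [← ENNReal.mul_le_mul_iff_right hk0 hkt]
    calc ENNReal.ofReal κ * volume E3 ≤ ENNReal.ofReal κ * volume {x | ENNReal.ofReal κ ≤ Φ x} := by
          gcongr
          intro x hx
          exact (show ENNReal.ofReal κ < Φ x from hx).le
      _ ≤ ∫⁻ x, Φ x := mul_meas_ge_le_lintegral hΦm _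
      _ ≤ Cw * ∫⁻ y, ‖b y‖ₑ := hΦi
      _ ≤ Cw * (2 * (ENNReal.ofReal lam * Q₀.vol)) := by
          gcongr
          exact hbL.trans (by gcongr)
      _ = ENNReal.ofReal (2 * Cw.toReal) * (ENNReal.ofReal lam * Q₀.vol) := by
          rw [ENNReal.ofReal_mul (by norm_num), ENNReal.ofReal_toReal hCwt]
          norm_num
          ring
      _ ≤ ENNReal.ofReal (δ / 4 * A) * (ENNReal.ofReal lam * Q₀.vol) := by gcongr
      _ = _ := by
          rw [ENNReal.ofReal_mul hδ4.le, hκm]; ring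
  have hd4 : ENNReal.ofReal (δ / 4) * Q₀.vol ≠ 0 :=
    mul_ne_zero (by simp [hδ]) Q₀.vol_pos.ne'
  obtain ⟨U, hEU, hUo, hU⟩ := (E1 ∪ E2 ∪ E3).exists_isOpen_le_add volume hd4
  refine ⟨U, hUo, ?_, ?_⟩
  · refine hU.trans ?_
    calc volume (E1 ∪ E2 ∪ E3) + ENNReal.ofReal (δ / 4) * Q₀.vol
        ≤ (ENNReal.ofReal (δ / 4) * Q₀.vol + ENNReal.ofReal (δ / 4) * Q₀.vol +
          ENNReal.ofReal (δ / 4) * Q₀.vol) + ENNReal.ofReal (δ / 4) * Q₀.vol := by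
          gcongr
          refine (measure_union_le _ _).trans (add_le_add ((measure_union_le _ _).trans ?_) v3)
          exact add_le_add v1 v2
      _ = (ENNReal.ofReal (δ / 4) + ENNReal.ofReal (δ / 4) + ENNReal.ofReal (δ / 4) +
          ENNReal.ofReal (δ / 4)) * Q₀.vol := by ring
      _ = ENNReal.ofReal δ * Q₀.vol := by
          rw [← ENNReal.ofReal_add hδ4.le hδ4.le, ← ENNReal.ofReal_add (by positivity) hδ4.le,
            ← ENNReal.ofReal_add (by positivity) hδ4.le]
          congr 2
          ring
  · intro R x ξ hx hξ hxU
    have hxE : x ∉ E1 ∪ E2 ∪ E3 := fun h => hxU (hEU h)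
    have hx1 : x ∉ E1 := fun h => hxE (Or.inl (Or.inl h))
    have hx2 : S.Vr ρ g x ≤ ENNReal.ofReal (B * (2 ^ d * κ)) :=
      not_lt.1 fun h => hxE (Or.inl (Or.inr h))
    have hx3 : Φ x ≤ ENNReal.ofReal κ := not_lt.1 fun h => hxE (Or.inr h)
    have hfar : ∀ Q ∈ P, ∀ y ∈ Q.set, 8 * D * a * Q.l < dist x y := by
      intro Q hQ y hy
      by_contra hcon
      exact hx1 (mem_iUnion.2 ⟨⟨Q, hQ⟩, Q.mem_dilate_of_dist hy (not_lt.1 hcon)⟩)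
    have hm3 := (R.measurableSet_dilate 3).compl
    have e1 := hgood g (2 ^ d * κ) hgm hgi hgM R x ξ hx hξ
    have e2 := hbadest P b u _ hBD R x ξ hx hξ hfar
    have hΦx : ∫⁻ y, ‖b y‖ₑ * S.wt (a * (D * u y)) x y = Φ x := by
      simp only [hΦ, mul_assoc]
    rw [hΦx] at e2
    have e3 := S.var_add_le hρ (hfi.indicator hm3) (hgi.indicator hm3) (hBD.bi.indicator hm3) ξ 1
      (by simp) (fun y => by
        by_cases hy : y ∈ (R.dilate 3)ᶜ
        · simp only [indicator_of_mem hy, one_mul, hfgb y]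
        · simp only [indicator_of_notMem hy]; simp)
    refine e3.trans ((add_le_add e1 e2).trans ?_)
    have hB0 : 0 ≤ B := Real.rpow_nonneg (by positivity) _
    have k1 : ENNReal.ofReal (B * (2 ^ d * κ)) = ENNReal.ofReal (B * 2 ^ d) * ENNReal.ofReal κ := by
      rw [← ENNReal.ofReal_mul (by positivity), mul_assoc]
    have k2 : ENNReal.ofReal (2 ^ d * κ) = ENNReal.ofReal (2 ^ d) * ENNReal.ofReal κ := by
      rw [← ENNReal.ofReal_mul (by positivity)]
    calc _ ≤ (ENNReal.ofReal (B * 2 ^ d) * ENNReal.ofReal κ +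
          Cg * (ENNReal.ofReal (2 ^ d) * ENNReal.ofReal κ)) +
          Cb * (2 * (ENNReal.ofReal κ * 2 ^ d) + ENNReal.ofReal κ) := by
          rw [← k1, ← k2]
          gcongr
      _ = (ENNReal.ofReal (B * 2 ^ d) + Cg * ENNReal.ofReal (2 ^ d) + Cb * (2 * 2 ^ d + 1)) *
          ENNReal.ofReal κ := by ring
      _ = _ := by rw [hκm, mul_assoc]

lemma CZO.var_zero {d : ℕ} (S : CZO d) {ρ : ℝ} (hρ : 2 < ρ) {h : Rd d → ℝ} (hh : h =ᵐ[volume] 0)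
    (x : Rd d) : S.var ρ h x = 0 := by
  have hρ0 : 0 < ρ := by linarith
  have hi : Integrable h := (integrable_zero _ _ _).congr hh.symm
  refine le_antisymm (S.var_le hρ0 hi x 0 (fun N e _ _ _ => ?_)) bot_le
  unfold CZO.fv
  have : ∀ i, ∫ y in ann x (e (i + 1)) (e i), S.K x y * h y = 0 := by
    intro i
    rw [integral_congr_ae (g := fun _ => 0), integral_zero]
    filter_upwards [ae_restrict_of_ae hh] with y hy
    rw [hy]; simp
  simp [this, hρ0]

lemma CZO.var_tail {d : ℕ} (S : CZO d) {ρ : ℝ} (hρ : 2 < ρ) (Q₀ : Cube d) {f : Rd d → ℝ}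
    (hfi : Integrable f) {x : Rd d} (hx : x ∈ Q₀.set) (K : ℝ≥0∞)
    (H : ∀ R : Cube d, x ∈ R.set → S.var ρ ((R.dilate 3)ᶜ.indicator f) x ≤ K) :
    S.var ρ f x ≤ K := by
  have hρ0 : 0 < ρ := by linarith
  refine S.var_le hρ0 hfi x K (fun N e e1 e2 e3 => ?_)
  have hD : 0 < √(d : ℝ) * 2 + 1 := by positivity
  obtain ⟨R, h1, h2, h3⟩ := exists_dyadic_small Q₀ hx (div_pos (e2 N) hD)
  refine le_trans (le_of_eq ?_) ((S.fv_le_var hρ0 (hfi.indicator (R.measurableSet_dilate 3).compl) x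
    N e e1 e2 e3).trans (H R h2))
  unfold CZO.fv
  congr 1
  refine Finset.sum_congr rfl (fun i hi => ?_)
  congr 2
  refine setIntegral_congr_fun (measurableSet_ann _ _ _) (fun y hy => ?_)
  have hmem : y ∈ (R.dilate 3)ᶜ := by
    intro hy3
    have h4 := R.dist_le_three h2 hy3
    have h5 : e N ≤ e (i + 1) := e1.antitone (Finset.mem_range.1 hi)
    have h6 := hy.1
    rw [lt_div_iff₀ hD] at h3
    have := R.hl
    nlinarith
  simp only [indicator_of_mem hmem]

lemma CZO.two_sided {d : ℕ} (S : CZO d) {ρ : ℝ} (hρ : 2 < ρ) (Q₀ : Cube d) {f : Rd d → ℝ}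
    (hfi : Integrable f) (K : ℝ≥0∞) (U : Set (Rd d))
    (H : ∀ (R : Cube d) (x ξ : Rd d), x ∈ R.set → ξ ∈ R.set → x ∉ U →
      S.var ρ ((R.dilate 3)ᶜ.indicator f) ξ ≤ K)
    (G : Set (Cube d)) (hGd : G.PairwiseDisjoint Cube.set)
    (hGU : ∀ R ∈ G, ∃ x ∈ R.set, x ∉ U) (hUG : ∀ x ∈ Q₀.set, x ∈ U → ∃ R ∈ G, x ∈ R.set)
    (x : Rd d) (hx : x ∈ Q₀.set) :
    (S.var ρ f x ≤ (∑' R : G, Set.indicator (R : Cube d).set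
        (fun _ => S.var ρ (((R : Cube d).dilate 3).indicator f) x) x) + K) ∧
    ((∑' R : G, Set.indicator (R : Cube d).set
        (fun _ => S.var ρ (((R : Cube d).dilate 3).indicator f) x) x) ≤ S.var ρ f x + K) := by
  by_cases hG : ∃ R ∈ G, x ∈ R.set
  · obtain ⟨R, hR, hxR⟩ := hG
    have hs : (∑' R : G, Set.indicator (R : Cube d).set
        (fun _ => S.var ρ (((R : Cube d).dilate 3).indicator f) x) x) =
        S.var ρ ((R.dilate 3).indicator f) x := by
      rw [tsum_eq_single (⟨R, hR⟩ : G), indicator_of_mem hxR]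
      intro R' hne
      refine indicator_of_notMem (fun hx' => hne (Subtype.ext ?_)) _
      by_contra hne'
      exact Set.disjoint_left.1 (hGd R'.2 hR hne') hx' hxR
    rw [hs]
    obtain ⟨x', hx', hxU⟩ := hGU R hR
    have hK := H R x' x hx' hxR hxU
    have i3 := hfi.indicator (R.measurableSet_dilate 3)
    have i3c := hfi.indicator (R.measurableSet_dilate 3).compl
    constructor
    · refine (S.var_add_le hρ hfi i3 i3c x 1 (by simp) (fun y => ?_)).trans (by gcongr)
      rw [one_mul]
      exact (congrFun (indicator_self_add_compl (R.dilate 3) f) y).symm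
    · refine (S.var_add_le hρ i3 hfi i3c x (-1) (by simp) (fun y => ?_)).trans (by gcongr)
      have := congrFun (indicator_self_add_compl (R.dilate 3) f) y
      simp only [Pi.add_apply] at this
      linarith
  · have hxU : x ∉ U := fun h => hG (hUG x hx h)
    have hs : (∑' R : G, Set.indicator (R : Cube d).set
        (fun _ => S.var ρ (((R : Cube d).dilate 3).indicator f) x) x) = 0 := by
      rw [ENNReal.tsum_eq_zero]
      exact fun R => indicator_of_notMem (fun h => hG ⟨R, R.2, h⟩) _
    rw [hs]
    refine ⟨?_, bot_le⟩
    rw [zero_add]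
    exact S.var_tail hρ Q₀ hfi hx K (fun R hR => H R x x hR hR hxU)

/-- The stopping cubes of an open set of small measure. -/
lemma exists_stopping {d : ℕ} (hd : 0 < d) (Q₀ : Cube d) {ε : ℝ} (hε0 : 0 < ε) (hε1 : ε < 1)
    (U : Set (Rd d)) (hUo : IsOpen U) (hU : volume U ≤ ENNReal.ofReal (ε / 2 ^ (d + 1)) * Q₀.vol) :
    ∃ F : Set (Cube d), (∀ Q ∈ F, IsDyadicSubcube Q₀ Q) ∧ F.PairwiseDisjoint Cube.set ∧
      (∑' Q : F, (Q : Cube d).vol) ≤ ENNReal.ofReal ε * Q₀.vol ∧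
      (∀ x ∈ Q₀.set, x ∈ U → ∃ R ∈ F, x ∈ R.set) ∧
      ∀ G : Set (Cube d), (∀ R ∈ G, IsDyadicSubcube Q₀ R) → G.PairwiseDisjoint Cube.set →
        (∀ Q ∈ F, ∃ R ∈ G, (Q : Cube d).set ⊆ (R : Cube d).set) → ∀ R ∈ G, ∃ x ∈ R.set, x ∉ U := by
  have hU2 : 2 ^ (d + 1) * volume U ≤ ENNReal.ofReal ε * Q₀.vol := by
    calc 2 ^ (d + 1) * volume U ≤ 2 ^ (d + 1) * (ENNReal.ofReal (ε / 2 ^ (d + 1)) * Q₀.vol) := by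
          gcongr
      _ = ENNReal.ofReal (2 ^ (d + 1) * (ε / 2 ^ (d + 1))) * Q₀.vol := by
          rw [ENNReal.ofReal_mul (by positivity), ENNReal.ofReal_pow (by norm_num), mul_assoc]
          norm_num
      _ = _ := by rw [mul_div_cancel₀ _ (by positivity)]
  set bad : Cube d → Prop := fun R => R.vol < 2 ^ (d + 1) * volume (R.set ∩ U) with hbad
  have h0 : ¬ bad Q₀ := by
    refine not_lt.2 ?_
    calc 2 ^ (d + 1) * volume (Q₀.set ∩ U) ≤ 2 ^ (d + 1) * volume U := by
          gcongr; exact inter_subset_right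
      _ ≤ _ := hU2
      _ ≤ 1 * Q₀.vol := by
          gcongr
          exact ENNReal.ofReal_le_one.2 hε1.le
      _ = _ := one_mul _
  have h1lt : ∀ R : Cube d, R.vol < 2 ^ (d + 1) * R.vol := by
    intro R
    calc R.vol = 1 * R.vol := (one_mul _).symm
      _ < _ := by
        rw [ENNReal.mul_lt_mul_iff_left R.vol_pos.ne' R.vol_ne_top]
        exact one_lt_pow₀ (by norm_num) (by omega)
  have hnb : ∀ R : Cube d, ¬ bad R → ∃ x ∈ R.set, x ∉ U := by
    intro R hR
    by_contra hcon
    push Not at hcon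
    refine hR ?_
    simp only [hbad]
    rw [inter_eq_left.2 hcon, R.volume_set]
    exact h1lt R
  refine ⟨maxBad Q₀ bad, fun Q hQ => hQ.1, maxBad_disjoint _ _, ?_, ?_, ?_⟩
  · have := (maxBad_countable Q₀ bad).to_subtype
    calc (∑' Q : maxBad Q₀ bad, (Q : Cube d).vol)
        ≤ ∑' Q : maxBad Q₀ bad, 2 ^ (d + 1) * volume ((Q : Cube d).set ∩ U) :=
          ENNReal.tsum_le_tsum fun Q => Q.2.2.1.le
      _ = 2 ^ (d + 1) * volume (⋃ Q : maxBad Q₀ bad, (Q : Cube d).set ∩ U) := by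
          rw [ENNReal.tsum_mul_left, measure_iUnion _
            (fun R => (Cube.measurableSet_set _).inter hUo.measurableSet)]
          intro R R' hne
          exact (maxBad_disjoint Q₀ _ R.2 R'.2 (fun h => hne (Subtype.ext h))).mono
            inter_subset_left inter_subset_left
      _ ≤ 2 ^ (d + 1) * volume U := by
          gcongr
          exact iUnion_subset fun R => inter_subset_right
      _ ≤ _ := hU2
  · intro x hx hxU
    obtain ⟨R, r1, r2, r3⟩ := exists_dyadic_open Q₀ hx hUo hxU
    have hb : bad R := by
      simp only [hbad]
      rw [inter_eq_left.2 r3, R.volume_set]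
      exact h1lt R
    obtain ⟨P, p1, p2⟩ := maxBad_cover hd Q₀ bad r1 hb
    exact ⟨P, p1, p2 r2⟩
  · intro G hG hGd hcov R hR
    by_cases hb : bad R
    · obtain ⟨Q, q1, q2⟩ := maxBad_cover hd Q₀ bad (hG R hR) hb
      obtain ⟨R', r1, r2⟩ := hcov Q q1
      have hRR : R = R' := by
        by_contra hne
        exact Set.disjoint_left.1 (hGd hR r1 hne) R.center_mem (r2 (q2 R.center_mem))
      rw [← hRR] at r2
      have hQR : R = Q := Cube.eq_of_set_eq_of_l (hG R hR) q1.1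
        (le_antisymm (Cube.l_le_of_subset hd q2) (Cube.l_le_of_subset hd r2)) q2
      rw [← hQR] at q1
      obtain ⟨P', p1, p2, p3, p4⟩ := maxBad_parent Q₀ bad h0 q1
      by_contra hcon
      push Not at hcon
      have h5 : 2 ^ (d + 1) * R.vol ≤ 2 ^ d * R.vol := by
        rw [← p4]
        refine le_trans ?_ (not_lt.1 p2)
        gcongr
        rw [← R.volume_set]
        exact measure_mono (subset_inter p3 hcon)
      rw [ENNReal.mul_le_mul_iff_left R.vol_pos.ne' R.vol_ne_top] at h5
      have h6 : (2 : ℝ≥0∞) ^ d < 2 ^ (d + 1) := by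
        exact_mod_cast (pow_lt_pow_right₀ (by norm_num) (Nat.lt_succ_self d) : (2 : ℕ) ^ d < 2 ^ (d + 1))
      exact absurd h5 (not_le.2 h6)
    · exact hnb R hb

lemma lint_eq_avg3 {d : ℕ} (Q₀ : Cube d) {f : Rd d → ℝ} (hfi : Integrable f)
    (hf0 : ∀ x, x ∉ Q₀.set → f x = 0) :
    ∫⁻ y, ‖f y‖ₑ = ENNReal.ofReal (3 ^ d * avg3 Q₀ f) * Q₀.vol := by
  have hl := Q₀.hl
  have h1 : ∫ y in Q₀.dilate 3, |f y| = ∫ y, |f y| := by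
    refine setIntegral_eq_integral_of_forall_compl_eq_zero (fun y hy => ?_)
    rw [hf0 y, abs_zero]
    intro h
    refine hy (fun i => ?_)
    have := h i
    constructor <;> linarith [this.1, this.2]
  have h2 : 3 ^ d * avg3 Q₀ f * Q₀.l ^ d = ∫ y, |f y| := by
    unfold avg3
    rw [h1, mul_pow]
    field_simp
  have h3 : 0 ≤ avg3 Q₀ f := by
    unfold avg3
    refine div_nonneg (integral_nonneg fun y => abs_nonneg _) (by positivity)
  unfold Cube.vol
  rw [← ENNReal.ofReal_mul (by positivity), h2]
  rw [← ofReal_integral_norm_eq_lintegral_enorm hfi]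
  rfl

/-- Sparse domination of the variation operator: for `f ∈ L^∞` supported in
a cube `Q₀` there is a family `F` of pairwise disjoint dyadic subcubes of `Q₀` of total
measure at most `ε|Q₀|` such that `V_ρ(T_* f)` is dominated, up to `C⟨|f|⟩_{3Q₀}`, by
`Σ_{Q∈F} V_ρ(T_*(fχ_{3Q})) χ_Q`, and similarly for any disjoint dyadic cover of `F`. -/
theorem variation_sparse_domination
    (d : ℕ) (hd : 0 < d) (S : CZO d) (ρ q : ℝ) (hρ : 2 < ρ) (hq : 1 < q)
    (hbdd : S.VarBdd ρ q) (ε : ℝ) (hε0 : 0 < ε) (hε1 : ε < 1) :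
    ∃ C : ℝ, 0 < C ∧ ∀ (Q₀ : Cube d) (f : Rd d → ℝ), Measurable f →
      (∃ M : ℝ, ∀ x, |f x| ≤ M) → (∀ x, x ∉ Q₀.set → f x = 0) →
      ∃ F : Set (Cube d), (∀ Q ∈ F, IsDyadicSubcube Q₀ Q) ∧
        F.PairwiseDisjoint Cube.set ∧
        (∑' Q : F, (Q : Cube d).vol) ≤ ENNReal.ofReal ε * Q₀.vol ∧
        (∀ᵐ x ∂(volume : Measure (Rd d)), x ∈ Q₀.set →
          (S.var ρ f x ≤
              (∑' Q : F, Set.indicator (Q : Cube d).set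
                (fun _ => S.var ρ (((Q : Cube d).dilate 3).indicator f) x) x) +
                ENNReal.ofReal (C * avg3 Q₀ f)) ∧
          ((∑' Q : F, Set.indicator (Q : Cube d).set
                (fun _ => S.var ρ (((Q : Cube d).dilate 3).indicator f) x) x) ≤
              S.var ρ f x + ENNReal.ofReal (C * avg3 Q₀ f))) ∧
        (∀ G : Set (Cube d), (∀ R ∈ G, IsDyadicSubcube Q₀ R) →
          G.PairwiseDisjoint Cube.set →
          (∀ Q ∈ F, ∃ R ∈ G, (Q : Cube d).set ⊆ (R : Cube d).set) →
          ∀ᵐ x ∂(volume : Measure (Rd d)), x ∈ Q₀.set →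
            (S.var ρ f x ≤
                (∑' R : G, Set.indicator (R : Cube d).set
                  (fun _ => S.var ρ (((R : Cube d).dilate 3).indicator f) x) x) +
                  ENNReal.ofReal (C * avg3 Q₀ f)) ∧
            ((∑' R : G, Set.indicator (R : Cube d).set
                  (fun _ => S.var ρ (((R : Cube d).dilate 3).indicator f) x) x) ≤
                S.var ρ f x + ENNReal.ofReal (C * avg3 Q₀ f))) := by
  have hδ : 0 < ε / 2 ^ (d + 1) := by positivity
  obtain ⟨Ce, hCe, hexc⟩ := S.exists_exc hd hρ hq hbdd hδ
  refine ⟨(Ce.toReal + 1) * 3 ^ d, by positivity, ?_⟩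
  intro Q₀ f hf hfM hf0
  obtain ⟨M, hM⟩ := hfM
  have hfi : Integrable f := by
    have h1 : IntegrableOn f Q₀.set := by
      refine Measure.integrableOn_of_bounded (M := M) ?_ hf.aestronglyMeasurable ?_
      · rw [Q₀.volume_set]; exact Q₀.vol_ne_top
      · exact Eventually.of_forall fun y => hM y
    rwa [integrableOn_iff_integrable_of_support_subset] at h1
    intro y hy
    by_contra h
    exact hy (hf0 y h)
  have havg := lint_eq_avg3 Q₀ hfi hf0
  have h3 : 0 ≤ avg3 Q₀ f := by
    unfold avg3
    have := Q₀.hl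
    exact div_nonneg (integral_nonneg fun y => abs_nonneg _) (by positivity)
  rcases h3.eq_or_lt with h30 | h30
  · have hz : f =ᵐ[volume] 0 := by
      rw [← h30, mul_zero, ENNReal.ofReal_zero, zero_mul,
        lintegral_eq_zero_iff (by fun_prop)] at havg
      filter_upwards [havg] with y hy
      simpa using hy
    have hvz : ∀ (A : Set (Rd d)) (x : Rd d), S.var ρ (A.indicator f) x = 0 := by
      intro A x
      refine S.var_zero hρ ?_ x
      filter_upwards [hz] with y hy
      by_cases hyA : y ∈ A
      · rw [indicator_of_mem hyA, hy]
      · rw [indicator_of_notMem hyA]; rfl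
    have hv0 : ∀ x, S.var ρ f x = 0 := fun x => S.var_zero hρ hz x
    refine ⟨∅, by simp, by simp, by simp, ?_, ?_⟩
    · exact Eventually.of_forall fun x _ => ⟨by rw [hv0]; exact bot_le, by simp⟩
    · intro G _ _ _
      exact Eventually.of_forall fun x _ => ⟨by rw [hv0]; exact bot_le, by simp [hvz]⟩
  have hlam : 0 < 3 ^ d * avg3 Q₀ f := by positivity
  obtain ⟨U, hUo, hU, H⟩ := hexc Q₀ f hf hfi hf0 _ hlam havg.le
  obtain ⟨F, hF1, hF2, hF3, hF4, hF5⟩ := exists_stopping hd Q₀ hε0 hε1 U hUo hU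
  have hK : Ce * ENNReal.ofReal (3 ^ d * avg3 Q₀ f) ≤
      ENNReal.ofReal ((Ce.toReal + 1) * 3 ^ d * avg3 Q₀ f) := by
    have h0 : 0 ≤ Ce.toReal := ENNReal.toReal_nonneg
    rw [mul_assoc, ENNReal.ofReal_mul (p := Ce.toReal + 1) (by positivity)]
    gcongr
    calc Ce = ENNReal.ofReal Ce.toReal := (ENNReal.ofReal_toReal hCe).symm
      _ ≤ _ := ENNReal.ofReal_le_ofReal (by linarith)
  have key : ∀ G : Set (Cube d), (∀ R ∈ G, IsDyadicSubcube Q₀ R) → G.PairwiseDisjoint Cube.set →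
      (∀ Q ∈ F, ∃ R ∈ G, (Q : Cube d).set ⊆ (R : Cube d).set) → ∀ x ∈ Q₀.set,
      (S.var ρ f x ≤ (∑' R : G, Set.indicator (R : Cube d).set
          (fun _ => S.var ρ (((R : Cube d).dilate 3).indicator f) x) x) +
          ENNReal.ofReal ((Ce.toReal + 1) * 3 ^ d * avg3 Q₀ f)) ∧
      ((∑' R : G, Set.indicator (R : Cube d).set
          (fun _ => S.var ρ (((R : Cube d).dilate 3).indicator f) x) x) ≤
          S.var ρ f x + ENNReal.ofReal ((Ce.toReal + 1) * 3 ^ d * avg3 Q₀ f)) := by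
    intro G g1 g2 g3 x hx
    refine S.two_sided hρ Q₀ hfi _ U (fun R x ξ a1 a2 a3 => (H R x ξ a1 a2 a3).trans hK) G g2
      (hF5 G g1 g2 g3) ?_ x hx
    intro z hz hzU
    obtain ⟨Q, hQ, hzQ⟩ := hF4 z hz hzU
    obtain ⟨R, hR, hQR⟩ := g3 Q hQ
    exact ⟨R, hR, hQR hzQ⟩
  refine ⟨F, hF1, hF2, hF3, ?_, ?_⟩
  · exact Eventually.of_forall fun x hx => key F hF1 hF2 (fun Q hQ => ⟨Q, hQ, Subset.rfl⟩) x hx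
  · intro G g1 g2 g3
    exact Eventually.of_forall fun x hx => key G g1 g2 g3 x hx
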